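/- arXiv:2411.12568 — 6 statements merged into one kernel-verified Lean document; each statement's English description precedes it below -/
import Mathlib

section
/- Let b : ℕ → (0,∞) satisfy b(n+1) ≤ b(n) and b(n+1) ≥ (1/2) b(n) for all n, and b(n) → 0 as n → ∞. Let φ : ℝ → [0,1] be smooth with φ = 1 on (−∞,1/3], φ = 0 on [2/3,∞), and φ′ ≤ 0 everywhere. Define ρ : [0,∞) → ℝ by ρ(n+η) := 2(φ(η) b(n) + (1−φ(η)) b(n+1)) for n ∈ ℕ and η ∈ [0,1). Then ρ is smooth on [0,∞), ρ > 0, ρ′ ≤ 0, ρ(t) → 0 as t → ∞, ρ(n+η) ≥ b(n) for all n ∈ ℕ and η ∈ [0,1), and for every k ≥ 1 one has |ρ^{(k)}(t)| ≤ 2 (sup_{η∈[0,1]} |φ^{(k)}(η)|) · ρ(t) for all t ≥ 0; in particular ρ is a weight function. -/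
open Set Filter

/-- A weight function: a smooth positive function on `[0,∞)` with nonpositive derivative,
tending to `0` at infinity, all of whose derivatives are bounded by constant multiples of the
function itself. -/
def IsWeightFunction (ρ : ℝ → ℝ) : Prop :=
  ContDiffOn ℝ (⊤ : ℕ∞) ρ (Ici 0) ∧
  (∀ t ∈ Ici (0:ℝ), 0 < ρ t) ∧
  (∀ t ∈ Ici (0:ℝ), derivWithin ρ (Ici 0) t ≤ 0) ∧
  Tendsto ρ atTop (nhds 0) ∧
  ∀ k : ℕ, ∃ C : ℝ, ∀ t ∈ Ici (0:ℝ), |iteratedDerivWithin k ρ (Ici 0) t| ≤ C * ρ t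

/-- Interpolation of a positive sequence `b` with `b(n)/2 ≤ b(n+1) ≤ b(n)`, `b(n) → 0`, by a
smooth cutoff `φ` yields a weight function `ρ(n+η) = 2(φ(η) b(n) + (1-φ(η)) b(n+1))` which
dominates `b`. -/
theorem interpolated_weight_function (b : ℕ → ℝ) (hbpos : ∀ n, 0 < b n)
    (hbmono : ∀ n, b (n + 1) ≤ b n) (hbhalf : ∀ n, b n / 2 ≤ b (n + 1))
    (hblim : Tendsto b atTop (nhds 0))
    (φ : ℝ → ℝ) (hφsmooth : ContDiff ℝ (⊤ : ℕ∞) φ) (hφrange : ∀ x, φ x ∈ Icc (0:ℝ) 1)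
    (hφone : ∀ x : ℝ, x ≤ 1/3 → φ x = 1) (hφzero : ∀ x : ℝ, 2/3 ≤ x → φ x = 0)
    (hφderiv : ∀ x : ℝ, deriv φ x ≤ 0)
    (ρ : ℝ → ℝ)
    (hρdef : ∀ (n : ℕ), ∀ η ∈ Ico (0:ℝ) 1,
      ρ (n + η) = 2 * (φ η * b n + (1 - φ η) * b (n + 1))) :
    ContDiffOn ℝ (⊤ : ℕ∞) ρ (Ici 0) ∧
    (∀ t ∈ Ici (0:ℝ), 0 < ρ t) ∧
    (∀ t ∈ Ici (0:ℝ), derivWithin ρ (Ici 0) t ≤ 0) ∧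
    Tendsto ρ atTop (nhds 0) ∧
    (∀ (n : ℕ), ∀ η ∈ Ico (0:ℝ) 1, b n ≤ ρ (n + η)) ∧
    (∀ k : ℕ, 1 ≤ k → ∀ t ∈ Ici (0:ℝ),
      |iteratedDerivWithin k ρ (Ici 0) t|
        ≤ 2 * (⨆ η : Icc (0:ℝ) 1, |iteratedDeriv k φ η|) * ρ t) ∧
    IsWeightFunction ρ := by
  have key : ∀ t ∈ Ici (0:ℝ), ∃ n : ℕ, ∃ η ∈ Ico (0:ℝ) 1, t = n + η ∧ n = ⌊t⌋₊ := by
    intro t ht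
    refine ⟨⌊t⌋₊, t - ⌊t⌋₊, ⟨?_, ?_⟩, by ring, rfl⟩
    · linarith [Nat.floor_le (mem_Ici.1 ht)]
    · linarith [Nat.lt_floor_add_one t]
  have hdom : ∀ (n : ℕ), ∀ η ∈ Ico (0:ℝ) 1, b n ≤ ρ (n + η) := by
    intro n η hη
    rw [hρdef n η hη]
    have h1 := hφrange η
    nlinarith [mul_nonneg h1.1 (sub_nonneg.2 (hbmono n)), hbhalf n]
  have hup : ∀ (n : ℕ), ∀ η ∈ Ico (0:ℝ) 1, ρ (n + η) ≤ 2 * b n := by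
    intro n η hη
    rw [hρdef n η hη]
    have h1 := hφrange η
    nlinarith [mul_nonneg (sub_nonneg.2 h1.2) (sub_nonneg.2 (hbmono n))]
  have hpos : ∀ t ∈ Ici (0:ℝ), 0 < ρ t := by
    intro t ht
    obtain ⟨n, η, hη, rfl, -⟩ := key t ht
    exact (hbpos n).trans_le (hdom n η hη)
  let F : ℕ → ℝ → ℝ := fun n t =>
    2 * b (n + 1) + (2 * (b n - b (n + 1))) * φ (t - n)
  have hF : ∀ n, ContDiff ℝ (⊤ : ℕ∞) (F n) := by
    intro n
    have : ContDiff ℝ (⊤ : ℕ∞) (fun t : ℝ => φ (t - n)) :=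
      hφsmooth.comp (contDiff_id.sub contDiff_const)
    exact contDiff_const.add (contDiff_const.mul this)
  have hFeq : ∀ (n : ℕ), ∀ t ∈ Ici (0:ℝ), (n:ℝ) - 1/3 < t → t < n + 1 → ρ t = F n t := by
    intro n t ht h1 h2
    by_cases h : (n:ℝ) ≤ t
    · have := hρdef n (t - n) ⟨by linarith, by linarith⟩
      rw [add_sub_cancel] at this
      rw [this]
      simp only [F]
      ring
    · push Not at h
      obtain _ | m := n
      · exact absurd h (by simpa using ht)
      · push_cast at h h1
        have := hρdef m (t - m) ⟨by linarith, by linarith⟩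
        rw [add_sub_cancel, hφzero (t - m) (by linarith)] at this
        rw [this]
        simp only [F]
        rw [hφone _ (by push_cast; linarith)]
        ring
  have hloc : ∀ (n : ℕ), ∀ η ∈ Ico (0:ℝ) 1, ρ =ᶠ[nhdsWithin (n + η) (Ici 0)] F n := by
    intro n η hη
    have h1 : Ioo ((n:ℝ) - 1/3) (n + 1) ∈ nhds ((n:ℝ) + η) :=
      Ioo_mem_nhds (by linarith [hη.1]) (by linarith [hη.2])
    filter_upwards [self_mem_nhdsWithin, mem_nhdsWithin_of_mem_nhds h1] with t ht ht'
    exact hFeq n t ht ht'.1 ht'.2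
  have hmem : ∀ (n : ℕ), ∀ η ∈ Ico (0:ℝ) 1, (n:ℝ) + η ∈ Ici (0:ℝ) := by
    intro n η hη
    exact add_nonneg n.cast_nonneg hη.1
  have hsm : ContDiffOn ℝ (⊤ : ℕ∞) ρ (Ici 0) := by
    intro t ht
    obtain ⟨n, η, hη, rfl, -⟩ := key t ht
    exact (hF n).contDiffWithinAt.congr_of_eventuallyEq (hloc n η hη)
      ((hloc n η hη).self_of_nhdsWithin ht)
  have hder : ∀ k : ℕ, 1 ≤ k → ∀ (n : ℕ), ∀ η ∈ Ico (0:ℝ) 1,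
      iteratedDerivWithin k ρ (Ici 0) (n + η)
        = (2 * (b n - b (n + 1))) * iteratedDeriv k φ η := by
    intro k hk n η hη
    have ht := hmem n η hη
    have hk' : ((k : ℕ∞) : WithTop ℕ∞) ≤ ((⊤ : ℕ∞) : WithTop ℕ∞) := by
      exact_mod_cast le_top
    rw [(hloc n η hη).iteratedDerivWithin_eq ((hloc n η hη).self_of_nhdsWithin ht),
      iteratedDerivWithin_eq_iteratedDeriv (uniqueDiffOn_Ici 0)
        (((hF n).of_le hk').contDiffAt) ht]
    simp only [F]
    rw [iteratedDeriv_const_add (by omega), iteratedDeriv_const_mul_field,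
      iteratedDeriv_comp_sub_const]
    simp
  have hdneg : ∀ t ∈ Ici (0:ℝ), derivWithin ρ (Ici 0) t ≤ 0 := by
    intro t ht
    obtain ⟨n, η, hη, rfl, -⟩ := key t ht
    rw [← iteratedDerivWithin_one, hder 1 le_rfl n η hη, iteratedDeriv_one]
    exact mul_nonpos_of_nonneg_of_nonpos (by linarith [hbmono n]) (hφderiv η)
  have hlim : Tendsto ρ atTop (nhds 0) := by
    have h1 : Tendsto (fun t : ℝ => 2 * b ⌊t⌋₊) atTop (nhds 0) := by
      simpa using (hblim.comp (tendsto_nat_floor_atTop (α := ℝ))).const_mul 2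
    refine tendsto_of_tendsto_of_tendsto_of_le_of_le' tendsto_const_nhds h1 ?_ ?_
    · filter_upwards [eventually_ge_atTop 0] with t ht using (hpos t ht).le
    · filter_upwards [eventually_ge_atTop 0] with t ht
      obtain ⟨n, η, hη, h, hn⟩ := key t ht
      rw [← hn, h]
      exact hup n η hη
  have hbd : ∀ k : ℕ, 1 ≤ k → ∀ t ∈ Ici (0:ℝ),
      |iteratedDerivWithin k ρ (Ici 0) t|
        ≤ 2 * (⨆ η : Icc (0:ℝ) 1, |iteratedDeriv k φ η|) * ρ t := by
    intro k hk t ht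
    obtain ⟨n, η, hη, rfl, -⟩ := key t ht
    have hk' : ((k : ℕ∞) : WithTop ℕ∞) ≤ ((⊤ : ℕ∞) : WithTop ℕ∞) := by
      exact_mod_cast le_top
    have hc : Continuous (fun x : Icc (0:ℝ) 1 => |iteratedDeriv k φ x|) :=
      ((hφsmooth.continuous_iteratedDeriv k hk').comp continuous_subtype_val).abs
    have hs : |iteratedDeriv k φ η| ≤ ⨆ η : Icc (0:ℝ) 1, |iteratedDeriv k φ η| :=
      le_ciSup (f := fun x : Icc (0:ℝ) 1 => |iteratedDeriv k φ x|)
        (isCompact_range hc).bddAbove ⟨η, hη.1, hη.2.le⟩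
    rw [hder k hk n η hη, abs_mul, abs_of_nonneg (by linarith [hbmono n])]
    set S := ⨆ η : Icc (0:ℝ) 1, |iteratedDeriv k φ η|
    have hS : 0 ≤ S := (abs_nonneg _).trans hs
    have h2 : 2 * (b n - b (n + 1)) ≤ 2 * ρ (n + η) := by
      linarith [hdom n η hη, hbpos (n + 1)]
    calc _ ≤ (2 * ρ (n + η)) * S :=
          mul_le_mul h2 hs (abs_nonneg _) (by linarith [hpos _ ht])
      _ = _ := by ring
  refine ⟨hsm, hpos, hdneg, hlim, hdom, hbd, hsm, hpos, hdneg, hlim, ?_⟩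
  intro k
  rcases Nat.eq_zero_or_pos k with rfl | hk
  · refine ⟨1, fun t ht => ?_⟩
    rw [iteratedDerivWithin_zero, abs_of_pos (hpos t ht), one_mul]
  · exact ⟨_, hbd k hk⟩
end

section
/- Let a ∈ ℝ and let ρ be a weight function. Let ε₁, ε₂ : [1,∞) × ℝ × (−1,1) → ℝ be smooth functions that are 2π-periodic in the second variable and satisfy, for every multi-index β, a bound |∂^β ε_i(t,φ,z)| ≤ C_β ρ(t). Define f(t,φ,z) := (t−1, φ + a − z + ε₁(t,φ,z), z/2 + ε₂(t,φ,z)). Then there exist t₀ ≥ 1 and a smooth function h : [t₀,∞) × ℝ → (−1,1), 2π-periodic in the second variable, such that for every multi-index β there is a constant C′_β with |∂^β h(t,φ)| ≤ C′_β ρ(t), and such that the graph of h is f-invariant: for all t ≥ t₀ + 1 and φ ∈ ℝ, writing φ′ := φ + a − h(t,φ) + ε₁(t,φ,h(t,φ)), one has h(t−1, φ′) = h(t,φ)/2 + ε₂(t,φ,h(t,φ)). -/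
open Set Filter

/-- The domain `[1,∞) × ℝ × (-1,1)` of the perturbed map. -/
def pertDomain : Set (ℝ × ℝ × ℝ) := Ici 1 ×ˢ (univ : Set ℝ) ×ˢ Ioo (-1) 1

/-- A perturbation term: smooth on `[1,∞) × ℝ × (-1,1)`, `2π`-periodic in the second variable,
with all derivatives bounded by constant multiples of `ρ(t)`. -/
def IsDecayingPert (ρ : ℝ → ℝ) (ε : ℝ × ℝ × ℝ → ℝ) : Prop :=
  ContDiffOn ℝ (⊤ : ℕ∞) ε pertDomain ∧
  (∀ t φ z : ℝ, ε (t, φ + 2 * Real.pi, z) = ε (t, φ, z)) ∧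
  ∀ n : ℕ, ∃ C : ℝ, ∀ p ∈ pertDomain, ‖iteratedFDerivWithin ℝ n ε pertDomain p‖ ≤ C * ρ p.1

lemma ofp_sum_partSize {n : ℕ} (c : OrderedFinpartition n) :
    ∑ i, c.partSize i = n := by
  have := Fintype.card_congr c.equivSigma
  simpa using this

lemma ofp_length_eq {n : ℕ} (c : OrderedFinpartition n) (h : c.length = n) :
    c = OrderedFinpartition.atomic n := by
  have h1 : ∀ i, c.partSize i = 1 := by
    have hs := ofp_sum_partSize c
    have : ∑ i : Fin c.length, (c.partSize i - 1) = 0 := by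
      have h2 : ∑ i : Fin c.length, (c.partSize i - 1) + ∑ i : Fin c.length, 1 = n := by
        rw [← Finset.sum_add_distrib]
        refine Eq.trans ?_ hs
        refine Finset.sum_congr rfl fun i _ => ?_
        have := c.partSize_pos i; omega
      simp at h2; omega
    intro i
    have := (Finset.sum_eq_zero_iff.1 this) i (Finset.mem_univ i)
    have := c.partSize_pos i; omega
  obtain ⟨len, ps, pos, emb, esm, psm, dj, cov⟩ := c
  simp only at h h1
  subst h
  obtain rfl : ps = fun _ => 1 := funext h1
  have he : emb = fun m _ => m := by
    have hm : StrictMono fun m => emb m 0 := psm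
    have : (fun m => emb m 0) = id := by
      refine (StrictMono.range_inj hm strictMono_id).1 ?_
      · have : Function.Surjective (fun m => emb m 0) :=
          Finite.injective_iff_surjective.1 hm.injective
        rw [this.range_eq]; simp
    funext m j
    rw [Subsingleton.elim j 0]
    exact congrFun this m
  subst he
  rfl

lemma ofp_length_one {n : ℕ} (c d : OrderedFinpartition n) (h : c.length = 1) (h' : d.length = 1) :
    c = d := by
  have hs := ofp_sum_partSize c
  have hs' := ofp_sum_partSize d
  obtain ⟨len, ps, pos, emb, esm, psm, dj, cov⟩ := c
  obtain ⟨len', ps', pos', emb', esm', psm', dj', cov'⟩ := d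
  simp only at h h' hs hs'
  subst h h'
  simp at hs hs'
  obtain rfl : ps = fun _ => n := by funext i; rw [Subsingleton.elim i 0]; exact hs
  obtain rfl : ps' = fun _ => n := by funext i; rw [Subsingleton.elim i 0]; exact hs'
  have key : ∀ e : Fin n → Fin n, StrictMono e → e = id := by
    intro e he
    refine (StrictMono.range_inj he strictMono_id).1 ?_
    have : Function.Surjective e := Finite.injective_iff_surjective.1 he.injective
    rw [this.range_eq]; simp
  obtain rfl : emb = emb' := by
    funext i
    rw [key _ (esm i), key _ (esm' i)]
  rfl

lemma fdb_bound {E F G : Type*} [NormedAddCommGroup E] [NormedSpace ℝ E]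
    [NormedAddCommGroup F] [NormedSpace ℝ F] [NormedAddCommGroup G] [NormedSpace ℝ G]
    {f : F → G} {g : E → F} (hf : ContDiff ℝ (⊤ : ℕ∞) f) (hg : ContDiff ℝ (⊤ : ℕ∞) g)
    {k : ℕ} (hk : 2 ≤ k) (x : E) {M Φ : ℝ} (hM : 1 ≤ M) (hΦ : 0 ≤ Φ)
    (h1 : ∀ j, 2 ≤ j → j < k → ‖iteratedFDeriv ℝ j f (g x)‖ ≤ Φ)
    (h2 : ∀ j, 1 ≤ j → j < k → ‖iteratedFDeriv ℝ j g x‖ ≤ M) :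
    ‖iteratedFDeriv ℝ k (fun y => f (g y)) x‖ ≤
      ‖iteratedFDeriv ℝ k f (g x)‖ * ‖iteratedFDeriv ℝ 1 g x‖ ^ k
      + ‖iteratedFDeriv ℝ 1 f (g x)‖ * ‖iteratedFDeriv ℝ k g x‖
      + Fintype.card (OrderedFinpartition k) * (Φ * M ^ k) := by
  classical
  have h0 := iteratedFDeriv_comp (x := x) (hf.contDiffAt) (hg.contDiffAt) (i := k)
    (by exact_mod_cast le_top)
  change ‖iteratedFDeriv ℝ k (f ∘ g) x‖ ≤ _
  rw [h0, FormalMultilinearSeries.taylorComp]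
  refine (norm_sum_le _ _).trans ?_
  have hb : ∀ c : OrderedFinpartition k,
      ‖(ftaylorSeries ℝ f (g x)).compAlongOrderedFinpartition (ftaylorSeries ℝ g x) c‖ ≤
      (if c.length = k then ‖iteratedFDeriv ℝ k f (g x)‖ * ‖iteratedFDeriv ℝ 1 g x‖ ^ k else 0)
      + (if c.length = 1 then ‖iteratedFDeriv ℝ 1 f (g x)‖ * ‖iteratedFDeriv ℝ k g x‖ else 0)
      + Φ * M ^ k := by
    intro c
    have hΦM : 0 ≤ Φ * M ^ k := by positivity
    refine (c.norm_compAlongOrderedFinpartition_le _ _).trans ?_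
    simp only [ftaylorSeries]
    have hsum := ofp_sum_partSize c
    by_cases hc : c.length = k
    · have e := ofp_length_eq c hc
      subst e
      have hk1 : k ≠ 1 := by omega
      have e2 : ∏ i, ‖iteratedFDeriv ℝ ((OrderedFinpartition.atomic k).partSize i) g x‖
          = ‖iteratedFDeriv ℝ 1 g x‖ ^ k := by
        change ∏ i : Fin k, ‖iteratedFDeriv ℝ 1 g x‖ = _
        rw [Finset.prod_const]; simp
      rw [e2, if_pos hc, if_neg (by rw [hc]; exact hk1), hc]
      linarith
    · by_cases hc1 : c.length = 1
      · have hlt : ∀ i, c.partSize i = k := by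
          intro i
          refine Eq.trans ?_ hsum
          have hi : ∀ j, j = i := fun j => by
            apply Fin.ext; have := j.2; have := i.2; omega
          rw [Finset.sum_eq_single i (fun j _ hj => absurd (hi j) hj) (by simp)]
        have : ∏ i, ‖iteratedFDeriv ℝ (c.partSize i) g x‖ = ‖iteratedFDeriv ℝ k g x‖ := by
          rw [Finset.prod_congr rfl (fun i _ => by rw [hlt i])]
          simp [hc1]
        rw [this, if_neg hc, if_pos hc1, hc1]
        linarith
      · rw [if_neg hc, if_neg hc1]
        have hlen : 2 ≤ c.length := by
          have := c.length_pos (by omega); omega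
        have hlen' : c.length < k := lt_of_le_of_ne c.length_le hc
        have hps : ∀ i, c.partSize i < k := by
          intro i
          obtain ⟨j, hj⟩ : ∃ j, j ≠ i := by
            have : Nontrivial (Fin c.length) := Fin.nontrivial_iff_two_le.2 hlen
            exact exists_ne i
          have := Finset.add_le_sum (f := c.partSize) (s := Finset.univ) (fun i _ => Nat.zero_le _)
            (Finset.mem_univ j) (Finset.mem_univ i) hj
          have := c.partSize_pos j
          omega
        have : ∏ i, ‖iteratedFDeriv ℝ (c.partSize i) g x‖ ≤ M ^ c.length := by
          refine (Finset.prod_le_prod (fun i _ => norm_nonneg _)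
            (fun i _ => h2 _ (c.partSize_pos i) (hps i))).trans ?_
          simp
        rw [zero_add, zero_add]
        exact mul_le_mul (h1 _ hlen hlen') (this.trans (pow_le_pow_right₀ hM hlen'.le))
          (Finset.prod_nonneg fun i _ => norm_nonneg _) hΦ
  refine (Finset.sum_le_sum fun c _ => hb c).trans ?_
  rw [Finset.sum_add_distrib, Finset.sum_add_distrib]
  simp only [Finset.sum_const, Finset.card_univ, nsmul_eq_mul]
  gcongr
  · rw [Finset.sum_eq_single (OrderedFinpartition.atomic k)]
    · split_ifs
      · exact le_rfl
      · positivity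
    · intro c _ hc
      exact if_neg fun h => hc (ofp_length_eq c h)
    · simp
  · by_cases he : ∃ d : OrderedFinpartition k, d.length = 1
    · obtain ⟨d, hd⟩ := he
      rw [Finset.sum_eq_single d]
      · rw [if_pos hd]
      · intro c _ hc
        exact if_neg fun h => hc (ofp_length_one c d h hd)
      · simp
    · push Not at he
      rw [Finset.sum_eq_zero (fun c _ => if_neg (he c))]
      positivity

lemma interp_bound {E F : Type*} [NormedAddCommGroup E] [NormedSpace ℝ E]
    [NormedAddCommGroup F] [NormedSpace ℝ F] {w : E → F} (hw : ContDiff ℝ (⊤ : ℕ∞) w)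
    {δ M s : ℝ} (hs : 0 < s) (h0 : ∀ x, ‖w x‖ ≤ δ) (h2 : ∀ x, ‖iteratedFDeriv ℝ 2 w x‖ ≤ M)
    (x : E) : ‖fderiv ℝ w x‖ ≤ 2 * δ / s + M * s := by
  have hδ : 0 ≤ δ := (norm_nonneg _).trans (h0 x)
  have hM : 0 ≤ M := (norm_nonneg _).trans (h2 x)
  have hd : Differentiable ℝ w := hw.differentiable (by simp)
  have hd2 : ContDiff ℝ (⊤ : ℕ∞) (fderiv ℝ w) := hw.fderiv_right (by simp)
  have hdd : Differentiable ℝ (fderiv ℝ w) := hd2.differentiable (by simp)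
  have hb : ∀ y, ‖fderiv ℝ (fderiv ℝ w) y‖ ≤ M := by
    intro y
    rw [← norm_iteratedFDeriv_one, norm_iteratedFDeriv_fderiv]
    exact h2 y
  have hlip : ∀ y, ‖fderiv ℝ w y - fderiv ℝ w x‖ ≤ M * ‖y - x‖ := fun y =>
    Convex.norm_image_sub_le_of_norm_fderiv_le (s := univ) (fun z _ => hdd z)
      (fun z _ => hb z) convex_univ (mem_univ _) (mem_univ _)
  have key : ∀ e : E, ‖e‖ = s → ‖fderiv ℝ w x e‖ ≤ 2 * δ + M * s * s := by
    intro e he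
    have := Convex.norm_image_sub_le_of_norm_fderiv_le' (𝕜 := ℝ) (f := w) (φ := fderiv ℝ w x)
      (s := Metric.closedBall x s) (C := M * s) (x := x) (y := x + e)
      (fun z _ => hd z) (fun z hz => (hlip z).trans (by
        gcongr; simpa [dist_eq_norm] using hz)) (convex_closedBall x s)
      (by simp [hs.le]) (by simp [he])
    rw [add_sub_cancel_left, he] at this
    have h3 : fderiv ℝ w x e = w (x + e) - w x - (w (x + e) - w x - fderiv ℝ w x e) := by abel
    rw [h3]
    refine (norm_sub_le _ _).trans ?_
    have := norm_sub_le (w (x + e)) (w x)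
    linarith [h0 x, h0 (x + e)]
  refine ContinuousLinearMap.opNorm_le_bound _ (by positivity) fun e => ?_
  rcases eq_or_ne e 0 with rfl | he
  · simp
  have hne : 0 < ‖e‖ := norm_pos_iff.2 he
  have := key ((s / ‖e‖) • e) (by rw [norm_smul, Real.norm_of_nonneg (by positivity)]; field_simp)
  rw [map_smul, norm_smul, Real.norm_of_nonneg (by positivity)] at this
  have h4 : ‖fderiv ℝ w x e‖ = (s / ‖e‖ * ‖fderiv ℝ w x e‖) * (‖e‖ / s) := by field_simp
  rw [h4]
  refine (mul_le_mul_of_nonneg_right this (by positivity)).trans (le_of_eq ?_)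
  field_simp

lemma geom_deriv {E : Type} [NormedAddCommGroup E] [NormedSpace ℝ E] (k : ℕ) :
    ∀ {F : Type} [NormedAddCommGroup F] [NormedSpace ℝ F] (w : ℕ → E → F)
    (_ : ∀ m, ContDiff ℝ (⊤ : ℕ∞) (w m)) (C q : ℝ) (_ : 0 < q) (_ : q < 1)
    (_ : ∀ m x, ‖w m x‖ ≤ C * q ^ m)
    (_ : ∀ j : ℕ, ∃ K : ℝ, ∀ m x, ‖iteratedFDeriv ℝ j (w m) x‖ ≤ K),
    ∃ C' q' : ℝ, 0 < q' ∧ q' < 1 ∧ ∀ m x, ‖iteratedFDeriv ℝ k (w m) x‖ ≤ C' * q' ^ m := by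
  induction k with
  | zero =>
    intro F _ _ w hw C q hq hq1 h0 hK
    exact ⟨C, q, hq, hq1, fun m x => by simpa using h0 m x⟩
  | succ k ih =>
    intro F _ _ w hw C q hq hq1 h0 hK
    obtain ⟨M, hM⟩ := hK 2
    obtain ⟨C', q', h1, h2, h3⟩ := ih (fun m => fderiv ℝ (w m))
      (fun m => (hw m).fderiv_right (by simp)) (2 * C + M) (Real.sqrt q) (Real.sqrt_pos.2 hq)
      (by rw [Real.sqrt_lt' one_pos]; simpa using hq1)
      (fun m x => by
        have hs : 0 < Real.sqrt q ^ m := pow_pos (Real.sqrt_pos.2 hq) m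
        have := interp_bound (hw m) hs (h0 m) (hM m) x
        refine this.trans (le_of_eq ?_)
        have e : q ^ m = Real.sqrt q ^ m * Real.sqrt q ^ m := by
          rw [← mul_pow, Real.mul_self_sqrt hq.le]
        rw [e]
        field_simp)
      (fun j => by
        obtain ⟨K, hK⟩ := hK (j + 1)
        exact ⟨K, fun m x => by rw [norm_iteratedFDeriv_fderiv]; exact hK m x⟩)
    exact ⟨C', q', h1, h2, fun m x => by rw [← norm_iteratedFDeriv_fderiv]; exact h3 m x⟩

lemma smooth_limit {E : Type} [NormedAddCommGroup E] [NormedSpace ℝ E]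
    {F : Type} [NormedAddCommGroup F] [NormedSpace ℝ F] [CompleteSpace F] (v : ℕ → E → F)
    (hv : ∀ m, ContDiff ℝ (⊤ : ℕ∞) (v m)) (hv0 : ∀ x, v 0 x = 0)
    (C q : ℝ) (hq : 0 < q) (hq1 : q < 1)
    (h0 : ∀ m x, ‖v (m + 1) x - v m x‖ ≤ C * q ^ m)
    (hK : ∀ j : ℕ, ∃ K : ℝ, ∀ m x, ‖iteratedFDeriv ℝ j (v m) x‖ ≤ K) :
    ∃ u : E → F, ContDiff ℝ (⊤ : ℕ∞) u ∧ ∀ (k : ℕ) (x : E),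
      Tendsto (fun m => iteratedFDeriv ℝ k (v m) x) atTop (nhds (iteratedFDeriv ℝ k u x)) := by
  set w : ℕ → E → F := fun m x => v (m + 1) x - v m x with hw
  have hws : ∀ m, ContDiff ℝ (⊤ : ℕ∞) (w m) := fun m => (hv (m + 1)).sub (hv m)
  have hwd : ∀ (j m : ℕ) (x : E), iteratedFDeriv ℝ j (w m) x
      = iteratedFDeriv ℝ j (v (m + 1)) x - iteratedFDeriv ℝ j (v m) x := by
    intro j m x
    exact fun_iteratedFDeriv_sub_apply ((hv (m+1)).contDiffAt.of_le (by exact_mod_cast le_top))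
      ((hv m).contDiffAt.of_le (by exact_mod_cast le_top))
  have hwK : ∀ j : ℕ, ∃ K : ℝ, ∀ m x, ‖iteratedFDeriv ℝ j (w m) x‖ ≤ K := by
    intro j
    obtain ⟨K, hK⟩ := hK j
    refine ⟨K + K, fun m x => ?_⟩
    rw [hwd]
    exact (norm_sub_le _ _).trans (add_le_add (hK _ _) (hK _ _))
  have hg := fun k => geom_deriv k w hws C q hq hq1 h0 hwK
  choose C' q' hq0' hq1' hb using hg
  have hsum : ∀ k, Summable (fun m => C' k * q' k ^ m) := fun k =>
    (summable_geometric_of_lt_one (hq0' k).le (hq1' k)).mul_left _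
  refine ⟨fun x => ∑' m, w m x, ?_, ?_⟩
  · exact contDiff_tsum (N := ⊤) (v := fun k m => C' k * q' k ^ m) hws (fun k _ => hsum k)
      (fun k i x _ => hb k i x)
  · intro k x
    rw [iteratedFDeriv_tsum_apply (N := ⊤) (v := fun k m => C' k * q' k ^ m) hws
      (fun k _ => hsum k) (fun k i x _ => hb k i x) le_top x]
    have hS : Summable fun m => iteratedFDeriv ℝ k (w m) x :=
      Summable.of_norm_bounded (hsum k) (fun m => hb k m x)
    refine hS.hasSum.tendsto_sum_nat.congr fun m => ?_
    simp only [hwd]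
    rw [Finset.sum_range_sub (fun m => iteratedFDeriv ℝ k (v m) x)]
    have : v 0 = fun _ => 0 := funext hv0
    rw [this]
    simp
section Core

variable {X V : Type} [NormedAddCommGroup X] [NormedSpace ℝ X]
  [NormedAddCommGroup V] [NormedSpace ℝ V]

lemma norm_iter_clm_comp {Y Z W : Type*} [NormedAddCommGroup Y] [NormedSpace ℝ Y]
    [NormedAddCommGroup Z] [NormedSpace ℝ Z] [NormedAddCommGroup W] [NormedSpace ℝ W]
    (L : Z →L[ℝ] W) {v : Y → Z} (hv : ContDiff ℝ (⊤ : ℕ∞) v) (j : ℕ) (x : Y) :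
    ‖iteratedFDeriv ℝ j (fun y => L (v y)) x‖ ≤ ‖L‖ * ‖iteratedFDeriv ℝ j v x‖ := by
  have := L.iteratedFDeriv_comp_left (hv.contDiffAt (x := x)) (i := j) (by exact_mod_cast le_top)
  change ‖iteratedFDeriv ℝ j (L ∘ v) x‖ ≤ _
  rw [this]
  exact ContinuousLinearMap.norm_compContinuousMultilinearMap_le _ _

lemma norm_iter_add {Y Z : Type*} [NormedAddCommGroup Y] [NormedSpace ℝ Y]
    [NormedAddCommGroup Z] [NormedSpace ℝ Z] {f g : Y → Z}
    (hf : ContDiff ℝ (⊤ : ℕ∞) f) (hg : ContDiff ℝ (⊤ : ℕ∞) g) (j : ℕ) (x : Y) :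
    ‖iteratedFDeriv ℝ j (fun y => f y + g y) x‖ ≤
      ‖iteratedFDeriv ℝ j f x‖ + ‖iteratedFDeriv ℝ j g x‖ := by
  rw [fun_iteratedFDeriv_add_apply (hf.contDiffAt.of_le (by exact_mod_cast le_top))
    (hg.contDiffAt.of_le (by exact_mod_cast le_top))]
  exact norm_add_le _ _

lemma iter_add_const_zero {Y : Type*} [NormedAddCommGroup Y] [NormedSpace ℝ Y] (c : Y)
    {j : ℕ} (hj : 2 ≤ j) (x : Y) : ‖iteratedFDeriv ℝ j (fun y : Y => y + c) x‖ = 0 := by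
  obtain ⟨i, rfl⟩ : ∃ i, j = i + 1 := ⟨j - 1, by omega⟩
  rw [← norm_iteratedFDeriv_fderiv]
  have : fderiv ℝ (fun y : Y => y + c) = fun _ => ContinuousLinearMap.id ℝ Y := by
    funext y; simp
  rw [this, iteratedFDeriv_const_of_ne (by omega)]
  simp

/-- the backwards base map determined by `v` -/
def gMap (c : X) (B : V →L[ℝ] X) (v : X → V) (y : X) : X := (y + c) + B (v y)

/-- the transformed section, before composing with `gMap` -/
def pMap (A : V →L[ℝ] V) (E : X × V → V) (v : X → V) (x : X) : V := A (v x) + E (x, v x)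

/-- the iteration -/
def vSeq (c : X) (B : V →L[ℝ] X) (A : V →L[ℝ] V) (E : X × V → V) : ℕ → X → V
  | 0 => fun _ => 0
  | (m + 1) => fun y => pMap A E (vSeq c B A E m) (gMap c B (vSeq c B A E m) y)

lemma gMap_smooth (c : X) (B : V →L[ℝ] X) {v : X → V} (hv : ContDiff ℝ (⊤ : ℕ∞) v) :
    ContDiff ℝ (⊤ : ℕ∞) (gMap c B v) :=
  (contDiff_id.add contDiff_const).add (B.contDiff.comp hv)

lemma pMap_smooth (A : V →L[ℝ] V) {E : X × V → V} (hE : ContDiff ℝ (⊤ : ℕ∞) E)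
    {v : X → V} (hv : ContDiff ℝ (⊤ : ℕ∞) v) : ContDiff ℝ (⊤ : ℕ∞) (pMap A E v) :=
  (A.contDiff.comp hv).add (hE.comp (contDiff_id.prodMk hv))

lemma vSeq_smooth (c : X) (B : V →L[ℝ] X) (A : V →L[ℝ] V) {E : X × V → V}
    (hE : ContDiff ℝ (⊤ : ℕ∞) E) (m : ℕ) : ContDiff ℝ (⊤ : ℕ∞) (vSeq c B A E m) := by
  induction m with
  | zero => exact contDiff_const
  | succ m ih => exact (pMap_smooth A hE ih).comp (gMap_smooth c B ih)

lemma gMap_fderiv (c : X) {B : V →L[ℝ] X} (hB : ‖B‖ ≤ 2) {v : X → V}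
    (hv : ContDiff ℝ (⊤ : ℕ∞) v) (y : X) :
    ‖fderiv ℝ (gMap c B v) y‖ ≤ 1 + 2 * ‖fderiv ℝ v y‖ := by
  have hd := (hv.differentiable (by simp) y).hasFDerivAt
  have h : HasFDerivAt (gMap c B v)
      (ContinuousLinearMap.id ℝ X + B.comp (fderiv ℝ v y)) y :=
    ((hasFDerivAt_id y).add_const c).add (B.hasFDerivAt.comp y hd)
  rw [h.fderiv]
  refine (norm_add_le _ _).trans (add_le_add ContinuousLinearMap.norm_id_le ?_)
  exact (ContinuousLinearMap.opNorm_comp_le _ _).trans (by gcongr)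

lemma gMap_iter (c : X) {B : V →L[ℝ] X} (hB : ‖B‖ ≤ 2) {v : X → V}
    (hv : ContDiff ℝ (⊤ : ℕ∞) v) {j : ℕ} (hj : 2 ≤ j) (y : X) :
    ‖iteratedFDeriv ℝ j (gMap c B v) y‖ ≤ 2 * ‖iteratedFDeriv ℝ j v y‖ := by
  refine (norm_iter_add (contDiff_id.add contDiff_const) (B.contDiff.comp hv) j y).trans ?_
  have h1 := iter_add_const_zero c hj y
  have h2 := norm_iter_clm_comp B hv j y
  have h3 : ‖B‖ * ‖iteratedFDeriv ℝ j v y‖ ≤ 2 * ‖iteratedFDeriv ℝ j v y‖ := by gcongr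
  simp only [Function.comp_def, id] at *
  linarith

lemma pMap_fderiv {A : V →L[ℝ] V} (hA : ‖A‖ ≤ 1 / 2) {E : X × V → V}
    (hE : ContDiff ℝ (⊤ : ℕ∞) E) {v : X → V} (hv : ContDiff ℝ (⊤ : ℕ∞) v) (x : X)
    (h1 : ‖fderiv ℝ v x‖ ≤ 1) :
    ‖fderiv ℝ (pMap A E v) x‖ ≤ 1 / 2 * ‖fderiv ℝ v x‖ + ‖fderiv ℝ E (x, v x)‖ := by
  have hd := (hv.differentiable (by simp) x).hasFDerivAt
  have hEd := (hE.differentiable (by simp) (x, v x)).hasFDerivAt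
  have h : HasFDerivAt (pMap A E v)
      (A.comp (fderiv ℝ v x) + (fderiv ℝ E (x, v x)).comp
        ((ContinuousLinearMap.id ℝ X).prod (fderiv ℝ v x))) x :=
    (A.hasFDerivAt.comp x hd).add (hEd.comp x ((hasFDerivAt_id x).prodMk hd))
  rw [h.fderiv]
  refine (norm_add_le _ _).trans (add_le_add ?_ ?_)
  · exact (ContinuousLinearMap.opNorm_comp_le _ _).trans (by gcongr)
  · refine (ContinuousLinearMap.opNorm_comp_le _ _).trans ?_
    have : ‖(ContinuousLinearMap.id ℝ X).prod (fderiv ℝ v x)‖ ≤ 1 := by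
      rw [ContinuousLinearMap.opNorm_prod]
      exact max_le ContinuousLinearMap.norm_id_le h1
    exact mul_le_of_le_one_right (norm_nonneg _) this

lemma pMap_iter {A : V →L[ℝ] V} (hA : ‖A‖ ≤ 1 / 2) {E : X × V → V}
    (hE : ContDiff ℝ (⊤ : ℕ∞) E) {v : X → V} (hv : ContDiff ℝ (⊤ : ℕ∞) v) (x : X)
    (h1 : ‖fderiv ℝ v x‖ ≤ 1) (hE1 : ‖fderiv ℝ E (x, v x)‖ ≤ 1 / 64)
    {k : ℕ} (hk : 2 ≤ k) {M Φ : ℝ} (hM : 1 ≤ M) (hΦ : 0 ≤ Φ)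
    (hΦE : ∀ j ≤ k, ‖iteratedFDeriv ℝ j E (x, v x)‖ ≤ Φ)
    (hMv : ∀ j, 1 ≤ j → j < k → ‖iteratedFDeriv ℝ j v x‖ ≤ M) :
    ‖iteratedFDeriv ℝ k (pMap A E v) x‖ ≤ 33 / 64 * ‖iteratedFDeriv ℝ k v x‖ +
      (1 + Fintype.card (OrderedFinpartition k) * M ^ k) * Φ := by
  have hpr : ContDiff ℝ (⊤ : ℕ∞) (fun y => (y, v y)) := contDiff_id.prodMk hv
  refine (norm_iter_add (A.contDiff.comp hv) (hE.comp hpr) k x).trans ?_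
  have ha : ‖iteratedFDeriv ℝ k (A ∘ v) x‖ ≤ 1 / 2 * ‖iteratedFDeriv ℝ k v x‖ :=
    (norm_iter_clm_comp A hv k x).trans (by gcongr)
  have hpair : ∀ j, ‖iteratedFDeriv ℝ j (fun y => (y, v y)) x‖ ≤
      max ‖iteratedFDeriv ℝ j (fun y : X => y) x‖ ‖iteratedFDeriv ℝ j v x‖ := by
    intro j
    rw [iteratedFDeriv_prodMk (f := fun y : X => y) (g := v) (n := (⊤ : ℕ∞)) contDiff_id.contDiffAt hv.contDiffAt
      (by exact_mod_cast le_top)]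
    rw [ContinuousMultilinearMap.opNorm_prod]
  have hid : ∀ j, 2 ≤ j → ‖iteratedFDeriv ℝ j (fun y : X => y) x‖ = 0 := by
    intro j hj
    simpa using iter_add_const_zero (0 : X) hj x
  have hid1 : ‖iteratedFDeriv ℝ 1 (fun y : X => y) x‖ ≤ 1 := by
    rw [norm_iteratedFDeriv_one]
    rw [fderiv_fun_id]
    exact ContinuousLinearMap.norm_id_le
  have hp1 : ‖iteratedFDeriv ℝ 1 (fun y => (y, v y)) x‖ ≤ 1 := by
    refine (hpair 1).trans (max_le hid1 ?_)
    rwa [norm_iteratedFDeriv_one]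
  have hp2 : ∀ j, 2 ≤ j → ‖iteratedFDeriv ℝ j (fun y => (y, v y)) x‖
      ≤ ‖iteratedFDeriv ℝ j v x‖ := by
    intro j hj
    refine (hpair j).trans (max_le ?_ le_rfl)
    rw [hid j hj]; positivity
  have hb := fdb_bound hE hpr hk x hM hΦ (fun j _ hj => hΦE j hj.le) (fun j hj1 hj => by
    rcases Nat.lt_or_ge j 2 with h | h
    · obtain rfl : j = 1 := by omega
      exact hp1.trans hM
    · exact (hp2 j h).trans (hMv j hj1 hj))
  have hc1 : ‖iteratedFDeriv ℝ k E (x, v x)‖ * ‖iteratedFDeriv ℝ 1 (fun y => (y, v y)) x‖ ^ k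
      ≤ Φ * 1 := mul_le_mul (hΦE k le_rfl) (pow_le_one₀ (norm_nonneg _) hp1) (by positivity) hΦ
  have hc2 : ‖iteratedFDeriv ℝ 1 E (x, v x)‖ * ‖iteratedFDeriv ℝ k (fun y => (y, v y)) x‖
      ≤ 1 / 64 * ‖iteratedFDeriv ℝ k v x‖ := by
    rw [norm_iteratedFDeriv_one]
    exact mul_le_mul hE1 (hp2 k hk) (norm_nonneg _) (by norm_num)
  have hb' : ‖iteratedFDeriv ℝ k (E ∘ fun y => (y, v y)) x‖ ≤ Φ * 1
      + 1 / 64 * ‖iteratedFDeriv ℝ k v x‖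
      + Fintype.card (OrderedFinpartition k) * (Φ * M ^ k) := hb.trans (by gcongr)
  nlinarith [ha, hb']

end Core
section Core2

lemma unif_bound {ι : Type*} {f : ℕ → ι → ℝ} {s : ι → ℝ} (hs : ∀ i, 0 ≤ s i) (k : ℕ)
    (h : ∀ j < k, ∃ C : ℝ, ∀ i, f j i ≤ C * s i) :
    ∃ C : ℝ, 1 ≤ C ∧ ∀ j < k, ∀ i, f j i ≤ C * s i := by
  induction k with
  | zero => exact ⟨1, le_rfl, fun j hj => absurd hj (Nat.not_lt_zero _)⟩
  | succ k ih =>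
    obtain ⟨C, hC, h1⟩ := ih fun j hj => h j (by omega)
    obtain ⟨D, h2⟩ := h k (by omega)
    refine ⟨max C D, hC.trans (le_max_left _ _), fun j hj i => ?_⟩
    rcases Nat.lt_succ_iff_lt_or_eq.1 hj with hlt | rfl
    · exact (h1 j hlt i).trans (mul_le_mul_of_nonneg_right (le_max_left _ _) (hs i))
    · exact (h2 i).trans (mul_le_mul_of_nonneg_right (le_max_right _ _) (hs i))

lemma weight_bound {X : Type*} {τ : X → ℝ} {r : ℝ → ℝ} (hr : Antitone r) (hr0 : ∀ t, 0 < r t)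
    (a : ℕ → X → ℝ) (ha0 : ∀ y, a 0 y ≤ 0) (G : ℕ → X → X)
    (hG : ∀ m y, τ (G m y) = τ y + 1)
    (q : X → ℝ) (Q t₁ t₂ : ℝ) (hq0 : ∀ y, 0 ≤ q y) (hQ : 1 ≤ Q) (hqQ : ∀ y, q y ≤ Q)
    (hq1 : ∀ y, t₁ ≤ τ y → q y ≤ 5 / 8) (hq2 : ∀ y, τ y ≤ t₂ → q y ≤ 5 / 8) (C : ℝ) (hC : 0 ≤ C)
    (hstep : ∀ m y, a (m + 1) y ≤ q y * a m (G m y) + 1 / 4 * a m y + C * r (τ y)) :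
    ∃ K : ℝ, ∀ m y, a m y ≤ K * r (τ y) := by
  set W : ℝ → ℝ := fun t => (2 * Q) ^ ⌈t₁ - max t t₂⌉₊ with hW
  have hΛ : 1 ≤ 2 * Q := by linarith
  have hW1 : ∀ t, 1 ≤ W t := fun t => one_le_pow₀ hΛ
  have hWanti : ∀ t, W (t + 1) ≤ W t := fun t => by
    apply pow_le_pow_right₀ hΛ
    apply Nat.ceil_mono
    have : max t t₂ ≤ max (t + 1) t₂ := max_le_max (by linarith) le_rfl
    linarith
  have hWq : ∀ y, q y * W (τ y + 1) ≤ 5 / 8 * W (τ y) := by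
    intro y
    have hp := hW1 (τ y + 1)
    by_cases h : q y ≤ 5 / 8
    · exact mul_le_mul h (hWanti _) (by linarith) (by norm_num)
    · have h1 : τ y < t₁ := not_le.1 fun h' => h (hq1 y h')
      have h2 : t₂ < τ y := not_le.1 fun h' => h (hq2 y h')
      have e : W (τ y) = 2 * Q * W (τ y + 1) := by
        simp only [hW]
        rw [max_eq_left h2.le, max_eq_left (by linarith), ← pow_succ']
        congr 1
        have : t₁ - (τ y + 1) = (t₁ - τ y) - 1 := by ring
        rw [this, Nat.ceil_sub_one]
        have := Nat.ceil_pos.2 (sub_pos.2 h1)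
        omega
      rw [e]
      have := hqQ y
      nlinarith
  have main : ∀ m y, a m y ≤ 8 * C * W (τ y) * r (τ y) := by
    intro m
    induction m with
    | zero =>
      intro y
      refine (ha0 y).trans ?_
      have := hW1 (τ y); have := hr0 (τ y)
      positivity
    | succ m ih =>
      intro y
      have h1 := ih (G m y)
      have h2 := ih y
      have hry := hr0 (τ y)
      have hWy := hW1 (τ y)
      rw [hG] at h1
      have h3 : 8 * C * W (τ y + 1) * r (τ y + 1) ≤ 8 * C * W (τ y + 1) * r (τ y) := by
        have := hW1 (τ y + 1)
        have := hr (by linarith : τ y ≤ τ y + 1)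
        gcongr
      have h4 : q y * a m (G m y) ≤ 5 * C * W (τ y) * r (τ y) := by
        calc q y * a m (G m y) ≤ q y * (8 * C * W (τ y + 1) * r (τ y)) :=
              mul_le_mul_of_nonneg_left (h1.trans h3) (hq0 y)
          _ = (q y * W (τ y + 1)) * (8 * C * r (τ y)) := by ring
          _ ≤ (5 / 8 * W (τ y)) * (8 * C * r (τ y)) :=
              mul_le_mul_of_nonneg_right (hWq y) (by positivity)
          _ = _ := by ring
      have h5 : C * r (τ y) ≤ C * W (τ y) * r (τ y) := by
        rw [mul_assoc]
        have : r (τ y) ≤ W (τ y) * r (τ y) := by nlinarith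
        gcongr
      have := hstep m y
      linarith
  refine ⟨8 * C * (2 * Q) ^ ⌈t₁ - t₂⌉₊, fun m y => (main m y).trans ?_⟩
  have := hr0 (τ y)
  have : W (τ y) ≤ (2 * Q) ^ ⌈t₁ - t₂⌉₊ := by
    apply pow_le_pow_right₀ hΛ
    apply Nat.ceil_mono
    linarith [le_max_right (τ y) t₂]
  gcongr

variable {X V : Type} [NormedAddCommGroup X] [NormedSpace ℝ X]
  [NormedAddCommGroup V] [NormedSpace ℝ V]

lemma vSeq_fderiv_step (c : X) {B : V →L[ℝ] X} (hB : ‖B‖ ≤ 2) {A : V →L[ℝ] V} (hA : ‖A‖ ≤ 1 / 2)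
    {E : X × V → V} (hE : ContDiff ℝ (⊤ : ℕ∞) E) (m : ℕ)
    (h1 : ∀ x, ‖fderiv ℝ (vSeq c B A E m) x‖ ≤ 1 / 8) (y : X) :
    ‖fderiv ℝ (vSeq c B A E (m + 1)) y‖ ≤
      (1 / 2 * ‖fderiv ℝ (vSeq c B A E m) (gMap c B (vSeq c B A E m) y)‖ +
        ‖fderiv ℝ E (gMap c B (vSeq c B A E m) y,
          vSeq c B A E m (gMap c B (vSeq c B A E m) y))‖) * (5 / 4) := by
  set v := vSeq c B A E m with hvdef
  have hv : ContDiff ℝ (⊤ : ℕ∞) v := vSeq_smooth c B A hE m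
  have hg := gMap_smooth c B hv
  have hp := pMap_smooth A hE hv
  have hc : fderiv ℝ (vSeq c B A E (m + 1)) y =
      (fderiv ℝ (pMap A E v) (gMap c B v y)).comp (fderiv ℝ (gMap c B v) y) :=
    fderiv_comp y (hp.differentiable (by simp) _) (hg.differentiable (by simp) _)
  rw [hc]
  refine (ContinuousLinearMap.opNorm_comp_le _ _).trans ?_
  have ha := pMap_fderiv hA hE hv (gMap c B v y) ((h1 _).trans (by norm_num))
  have hb := gMap_fderiv c hB hv y
  have := h1 y
  exact mul_le_mul ha (hb.trans (by linarith)) (norm_nonneg _) (by positivity)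

lemma vSeq_fderiv (c : X) {B : V →L[ℝ] X} (hB : ‖B‖ ≤ 2) {A : V →L[ℝ] V} (hA : ‖A‖ ≤ 1 / 2)
    {E : X × V → V} (hE : ContDiff ℝ (⊤ : ℕ∞) E) (hE1 : ∀ p, ‖fderiv ℝ E p‖ ≤ 1 / 64) (m : ℕ) :
    ∀ x, ‖fderiv ℝ (vSeq c B A E m) x‖ ≤ 1 / 8 := by
  induction m with
  | zero => intro x; simp [vSeq]
  | succ m ih =>
    intro y
    refine (vSeq_fderiv_step c hB hA hE m ih y).trans ?_
    have h1 := ih (gMap c B (vSeq c B A E m) y)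
    have h2 := hE1 (gMap c B (vSeq c B A E m) y,
          vSeq c B A E m (gMap c B (vSeq c B A E m) y))
    linarith

lemma vSeq_fderiv_weight (c : X) {B : V →L[ℝ] X} (hB : ‖B‖ ≤ 2) {A : V →L[ℝ] V}
    (hA : ‖A‖ ≤ 1 / 2) {E : X × V → V} (hE : ContDiff ℝ (⊤ : ℕ∞) E)
    (hE1 : ∀ p, ‖fderiv ℝ E p‖ ≤ 1 / 64) {τ : X → ℝ} (hτ : ∀ y v, τ ((y + c) + B v) = τ y + 1)
    {b : ℝ → ℝ} (hb0 : ∀ t, 0 ≤ b t) (hb1 : ∀ t, b (t + 1) ≤ 13 / 10 * b t) {C : ℝ} (hC : 0 ≤ C)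
    (hEb : ∀ p, ‖fderiv ℝ E p‖ ≤ C * b (τ p.1)) (m : ℕ) :
    ∀ x, ‖fderiv ℝ (vSeq c B A E m) x‖ ≤ 10 * C * b (τ x) := by
  induction m with
  | zero => intro x; have := hb0 (τ x); simp [vSeq]; positivity
  | succ m ih =>
    intro y
    refine (vSeq_fderiv_step c hB hA hE m (vSeq_fderiv c hB hA hE hE1 m) y).trans ?_
    have h1 := ih (gMap c B (vSeq c B A E m) y)
    have h2 := hEb (gMap c B (vSeq c B A E m) y,
          vSeq c B A E m (gMap c B (vSeq c B A E m) y))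
    have e : τ (gMap c B (vSeq c B A E m) y) = τ y + 1 := hτ _ _
    simp only [e] at h1 h2
    have h3 : C * b (τ y + 1) ≤ C * (13 / 10 * b (τ y)) := mul_le_mul_of_nonneg_left (hb1 _) hC
    have := mul_nonneg hC (hb0 (τ y))
    linarith

lemma vSeq_norm_weight (c : X) {B : V →L[ℝ] X} {A : V →L[ℝ] V}
    (hA : ‖A‖ ≤ 1 / 2) {E : X × V → V} {τ : X → ℝ} (hτ : ∀ y v, τ ((y + c) + B v) = τ y + 1)
    {b : ℝ → ℝ} (hb0 : ∀ t, 0 ≤ b t) (hb1 : Antitone b) {C : ℝ} (hC : 0 ≤ C)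
    (hEb : ∀ p, ‖E p‖ ≤ C * b (τ p.1)) (m : ℕ) :
    ∀ x, ‖vSeq c B A E m x‖ ≤ 2 * C * b (τ x) := by
  induction m with
  | zero => intro x; have := hb0 (τ x); simp [vSeq]; positivity
  | succ m ih =>
    intro y
    set g := gMap c B (vSeq c B A E m) y with hg
    have h1 := ih g
    have h2 := hEb (g, vSeq c B A E m g)
    have e : τ g = τ y + 1 := hτ _ _
    simp only [e] at h1 h2
    have h3 : C * b (τ y + 1) ≤ C * b (τ y) := mul_le_mul_of_nonneg_left (hb1 (by linarith)) hC
    have h4 : ‖vSeq c B A E (m + 1) y‖ ≤ ‖A (vSeq c B A E m g)‖ + ‖E (g, vSeq c B A E m g)‖ :=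
      norm_add_le _ _
    have h5 : ‖A (vSeq c B A E m g)‖ ≤ 1 / 2 * ‖vSeq c B A E m g‖ :=
      (A.le_opNorm _).trans (by gcongr)
    linarith

lemma lip_of_fderiv {Y Z : Type*} [NormedAddCommGroup Y] [NormedSpace ℝ Y]
    [NormedAddCommGroup Z] [NormedSpace ℝ Z] {f : Y → Z} (hf : ContDiff ℝ (⊤ : ℕ∞) f) {C : ℝ}
    (hC : ∀ x, ‖fderiv ℝ f x‖ ≤ C) (x y : Y) : ‖f x - f y‖ ≤ C * ‖x - y‖ :=
  Convex.norm_image_sub_le_of_norm_fderiv_le (s := univ)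
    (fun z _ => hf.differentiable (by simp) z)
    (fun z _ => hC z) convex_univ (mem_univ _) (mem_univ _)

lemma pMap_diff {A : V →L[ℝ] V} (hA : ‖A‖ ≤ 1 / 2) {E : X × V → V}
    (hE : ContDiff ℝ (⊤ : ℕ∞) E) (hE1 : ∀ p, ‖fderiv ℝ E p‖ ≤ 1 / 64) (x y : X) (u w : V) {d : ℝ}
    (hd : ‖x - y‖ ≤ d) (hd' : ‖u - w‖ ≤ d) :
    ‖(A u + E (x, u)) - (A w + E (y, w))‖ ≤ 33 / 64 * d := by
  have h1 := lip_of_fderiv hE hE1 (x, u) (y, w)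
  have h2 : ‖(x, u) - (y, w)‖ ≤ d := by
    rw [Prod.mk_sub_mk, Prod.norm_def]; exact max_le hd hd'
  have h3 : ‖A (u - w)‖ ≤ 1 / 2 * d := (A.le_opNorm _).trans (by gcongr)
  have h4 : (A u + E (x, u)) - (A w + E (y, w)) = A (u - w) + (E (x, u) - E (y, w)) := by
    rw [map_sub]; abel
  rw [h4]
  refine (norm_add_le _ _).trans ?_
  linarith

lemma vSeq_cauchy (c : X) {B : V →L[ℝ] X} (hB : ‖B‖ ≤ 2) {A : V →L[ℝ] V} (hA : ‖A‖ ≤ 1 / 2)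
    {E : X × V → V} (hE : ContDiff ℝ (⊤ : ℕ∞) E) (hE1 : ∀ p, ‖fderiv ℝ E p‖ ≤ 1 / 64)
    (hE0 : ∀ p, ‖E p‖ ≤ 1 / 8) (m : ℕ) :
    ∀ x, ‖vSeq c B A E (m + 1) x - vSeq c B A E m x‖ ≤ 1 / 8 * (3 / 4) ^ m := by
  induction m with
  | zero => intro x; simpa [vSeq, pMap] using hE0 _
  | succ m ih =>
    intro y
    set v := vSeq c B A E (m + 1) with hv
    set w := vSeq c B A E m with hw
    set D : ℝ := 1 / 8 * (3 / 4) ^ m with hD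
    have hD0 : 0 ≤ D := by positivity
    have hws : ContDiff ℝ (⊤ : ℕ∞) w := vSeq_smooth c B A hE m
    have e1 : vSeq c B A E (m + 1 + 1) y = pMap A E v (gMap c B v y) := rfl
    have e2 : v y = pMap A E w (gMap c B w y) := rfl
    rw [e1, e2]
    have h1 : ‖pMap A E v (gMap c B v y) - pMap A E w (gMap c B v y)‖ ≤ 33 / 64 * D :=
      pMap_diff hA hE hE1 _ _ _ _ (by simpa using hD0) (ih _)
    have h2 : ‖pMap A E w (gMap c B v y) - pMap A E w (gMap c B w y)‖ ≤ 5 / 64 * (2 * D) := by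
      refine (lip_of_fderiv (C := 5 / 64) (pMap_smooth A hE hws) (fun x => ?_) _ _).trans ?_
      · have h3 := vSeq_fderiv c hB hA hE hE1 m x
        have h4 := pMap_fderiv hA hE hws x (h3.trans (by norm_num))
        have := hE1 (x, w x)
        linarith
      · have : gMap c B v y - gMap c B w y = B (v y - w y) := by
          simp [gMap]
        rw [this]
        gcongr
        exact (B.le_opNorm _).trans (mul_le_mul hB (ih y) (norm_nonneg _) (by norm_num))
    have h3 := norm_sub_le_norm_sub_add_norm_sub (pMap A E v (gMap c B v y))
      (pMap A E w (gMap c B v y)) (pMap A E w (gMap c B w y))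
    rw [pow_succ, ← mul_assoc, ← hD]
    linarith

end Core2
section Core3

variable {X V : Type} [NormedAddCommGroup X] [NormedSpace ℝ X]
  [NormedAddCommGroup V] [NormedSpace ℝ V]

lemma vSeq_bounds (c : X) {B : V →L[ℝ] X} (hB : ‖B‖ ≤ 2) {A : V →L[ℝ] V} (hA : ‖A‖ ≤ 1 / 2)
    {E : X × V → V} (hE : ContDiff ℝ (⊤ : ℕ∞) E) (hE1 : ∀ p, ‖fderiv ℝ E p‖ ≤ 1 / 64)
    {τ : X → ℝ} (hτ : ∀ y v, τ ((y + c) + B v) = τ y + 1)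
    {r : ℝ → ℝ} (hr : Antitone r) (hr0 : ∀ t, 0 < r t) (hr1 : ∀ t, r t ≤ 1)
    (hrt : Tendsto r atTop (nhds 0))
    (hEk : ∀ k : ℕ, ∃ C : ℝ, ∀ p, ‖iteratedFDeriv ℝ k E p‖ ≤ C * r (τ p.1))
    (hEx : ∃ C : ℝ, 0 ≤ C ∧ ∀ p, ‖fderiv ℝ E p‖ ≤ C * Real.exp (τ p.1 / 4)) (k : ℕ) :
    ∃ K : ℝ, ∀ m y, ‖iteratedFDeriv ℝ k (vSeq c B A E m) y‖ ≤ K * r (τ y) := by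
  induction k using Nat.strong_induction_on with
  | _ k ih =>
  rcases Nat.lt_or_ge k 2 with hk | hk
  · obtain ⟨C, hC⟩ := hEk k
    have hC' : ∀ p, ‖iteratedFDeriv ℝ k E p‖ ≤ |C| * r (τ p.1) := fun p =>
      (hC p).trans (mul_le_mul_of_nonneg_right (le_abs_self C) (hr0 _).le)
    interval_cases k
    · refine ⟨2 * |C|, fun m y => ?_⟩
      rw [norm_iteratedFDeriv_zero]
      exact vSeq_norm_weight c hA hτ (fun t => (hr0 t).le) hr (abs_nonneg C)
        (fun p => by rw [← norm_iteratedFDeriv_zero (𝕜 := ℝ)]; exact hC' p) m y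
    · refine ⟨10 * |C|, fun m y => ?_⟩
      rw [norm_iteratedFDeriv_one]
      refine vSeq_fderiv_weight c hB hA hE hE1 hτ (fun t => (hr0 t).le) (fun t => ?_) (abs_nonneg C)
        (fun p => by rw [← norm_iteratedFDeriv_one]; exact hC' p) m y
      have := hr (by linarith : t ≤ t + 1)
      have := hr0 t
      linarith
  -- the main case
  obtain ⟨M, hM, hMv⟩ := unif_bound (ι := ℕ × X) (s := fun i => r (τ i.2))
    (f := fun j i => ‖iteratedFDeriv ℝ j (vSeq c B A E i.1) i.2‖) (fun i => (hr0 _).le) k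
    (fun j hj => by
      obtain ⟨K, hK⟩ := ih j hj
      exact ⟨K, fun i => hK i.1 i.2⟩)
  obtain ⟨CE, hCE, hCEb⟩ := unif_bound (ι := X × V) (s := fun p => r (τ p.1))
    (f := fun j p => ‖iteratedFDeriv ℝ j E p‖) (fun i => (hr0 _).le) (k + 1) (fun j _ => hEk j)
  obtain ⟨Cx, hCx, hCxb⟩ := hEx
  have hvs := vSeq_smooth c B A hE
  have hv8 := vSeq_fderiv c hB hA hE hE1
  have hMv' : ∀ m x j, j < k → ‖iteratedFDeriv ℝ j (vSeq c B A E m) x‖ ≤ M := by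
    intro m x j hj
    refine (hMv j hj (m, x)).trans ?_
    exact mul_le_of_le_one_right (by linarith) (hr1 _)
  have hP : ∀ m x j, 2 ≤ j → j ≤ k → ‖iteratedFDeriv ℝ j (pMap A E (vSeq c B A E m)) x‖ ≤
      33 / 64 * ‖iteratedFDeriv ℝ j (vSeq c B A E m) x‖ +
      (1 + Fintype.card (OrderedFinpartition j) * M ^ j) * (CE * r (τ x)) := by
    intro m x j hj hjk
    refine pMap_iter hA hE (hvs m) x ((hv8 m x).trans (by norm_num)) (hE1 _) hj hM
      (mul_nonneg (by linarith) (hr0 _).le) (fun i hi => ?_) (fun i hi1 hi => ?_)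
    · exact hCEb i (by omega) (x, vSeq c B A E m x)
    · exact hMv' m x i (by omega)
  obtain ⟨CP, hCP, hCPb⟩ := unif_bound (ι := ℕ × X) (s := fun i => r (τ i.2))
    (f := fun j i => ‖iteratedFDeriv ℝ (j + 2) (pMap A E (vSeq c B A E i.1)) i.2‖)
    (fun i => (hr0 _).le) (k - 2)
    (fun j hj => by
      refine ⟨33 / 64 * M + (1 + Fintype.card (OrderedFinpartition (j + 2)) * M ^ (j + 2)) * CE,
        fun i => (hP i.1 i.2 (j + 2) (by omega) (by omega)).trans ?_⟩
      have := hMv (j + 2) (by omega) i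
      linarith)
  have hN : (0:ℝ) ≤ Fintype.card (OrderedFinpartition k) := Nat.cast_nonneg _
  set N : ℝ := ((Fintype.card (OrderedFinpartition k) : ℕ) : ℝ) with hNdef
  set β : X → ℝ := fun y => min (1 / 8) (min (M * r (τ y)) (10 * Cx * Real.exp (τ y / 4))) with hβ
  have hβ0 : ∀ y, 0 ≤ β y := fun y => by
    have := hr0 (τ y)
    simp only [hβ]
    refine le_min (by norm_num) (le_min ?_ ?_) <;> positivity
  have hβ8 : ∀ y, β y ≤ 1 / 8 := fun y => min_le_left _ _
  have hvβ : ∀ m y, ‖fderiv ℝ (vSeq c B A E m) y‖ ≤ β y := by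
    intro m y
    refine le_min (hv8 m y) (le_min ?_ ?_)
    · rw [← norm_iteratedFDeriv_one]
      exact hMv 1 (by omega) (m, y)
    · refine vSeq_fderiv_weight (b := fun t => Real.exp (t / 4)) c hB hA hE hE1 hτ
        (fun t => (Real.exp_pos _).le) (fun t => ?_) hCx hCxb m y
      have : Real.exp ((t + 1) / 4) = Real.exp (1 / 4) * Real.exp (t / 4) := by
        rw [← Real.exp_add]; ring_nf
      rw [this]
      have h4 : Real.exp (1 / 4) ≤ 13 / 10 := by
        have h5 : Real.exp (1 / 4) ^ 4 = Real.exp 1 := by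
          rw [← Real.exp_nat_mul]; norm_num
        by_contra h6
        push Not at h6
        have h7 : (13 / 10 : ℝ) ^ 4 < Real.exp (1 / 4) ^ 4 := by gcongr
        have := Real.exp_one_lt_d9
        rw [h5] at h7
        norm_num at h7
        linarith
      gcongr
  have hlim : ∀ (l : Filter ℝ) (s : ℝ → ℝ), Tendsto s l (nhds 0) →
      ∀ᶠ t in l, 33 / 64 * (1 + 2 * s t) ^ k ≤ 5 / 8 := by
    intro l s hs
    have : Tendsto (fun t => 33 / 64 * (1 + 2 * s t) ^ k) l
        (nhds (33 / 64 * (1 + 2 * 0) ^ k)) :=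
      (((hs.const_mul 2).const_add 1).pow k).const_mul _
    refine this.eventually_le_const ?_
    norm_num
  obtain ⟨t₁, ht₁⟩ := eventually_atTop.1 (hlim atTop (fun t => M * r t) (by
    simpa using hrt.const_mul M))
  obtain ⟨t₂, ht₂⟩ := eventually_atBot.1 (hlim atBot (fun t => 10 * Cx * Real.exp (t / 4)) (by
    have : Tendsto (fun t : ℝ => Real.exp (t / 4)) atBot (nhds 0) :=
      Real.tendsto_exp_atBot.comp (tendsto_id.atBot_div_const (by norm_num))
    simpa using this.const_mul (10 * Cx)))
  have h54 : (1:ℝ) ≤ (5 / 4) ^ k := one_le_pow₀ (by norm_num)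
  set C2 : ℝ := (1 + N * M ^ k) * CE with hC2
  have hC20 : 0 ≤ C2 := by positivity
  refine weight_bound hr hr0 (fun m y => ‖iteratedFDeriv ℝ k (vSeq c B A E m) y‖)
    (fun y => ?_) (fun m => gMap c B (vSeq c B A E m)) (fun m y => hτ _ _)
    (fun y => 33 / 64 * (1 + 2 * β y) ^ k) ((5 / 4) ^ k) t₁ t₂ (fun y => ?_) h54 (fun y => ?_)
    (fun y hy => ?_) (fun y hy => ?_)
    (C2 * (5 / 4) ^ k + N * (CP * (2 * M + 2) ^ k)) (by positivity) (fun m y => ?_)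
  · simp [vSeq]
  · have := hβ0 y; positivity
  · have h1 : (1 + 2 * β y) ^ k ≤ (5 / 4) ^ k :=
      pow_le_pow_left₀ (by linarith [hβ0 y]) (by linarith [hβ8 y]) k
    linarith
  · refine le_trans ?_ (ht₁ (τ y) hy)
    have := hβ0 y
    have : β y ≤ M * r (τ y) := (min_le_right _ _).trans (min_le_left _ _)
    gcongr
  · refine le_trans ?_ (ht₂ (τ y) hy)
    have := hβ0 y
    have : β y ≤ 10 * Cx * Real.exp (τ y / 4) := (min_le_right _ _).trans (min_le_right _ _)
    gcongr
  · set v := vSeq c B A E m with hv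
    set g := gMap c B v y with hg
    have hgτ : τ g = τ y + 1 := hτ _ _
    have hrg : r (τ g) ≤ r (τ y) := hr (by rw [hgτ]; linarith)
    have hry := hr0 (τ y)
    have hb := fdb_bound (pMap_smooth A hE (hvs m)) (gMap_smooth c B (hvs m)) hk y
      (M := 2 * M + 2) (Φ := CP * r (τ y)) (by linarith) (by positivity)
      (fun j hj hjk => by
        obtain ⟨i, rfl⟩ : ∃ i, j = i + 2 := ⟨j - 2, by omega⟩
        have h1 : ‖iteratedFDeriv ℝ (i + 2) (pMap A E (vSeq c B A E m)) g‖ ≤ CP * r (τ g) :=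
          hCPb i (by omega) (m, g)
        have h2 : CP * r (τ g) ≤ CP * r (τ y) := by gcongr
        exact h1.trans h2)
      (fun j hj hjk => by
        rcases Nat.lt_or_ge j 2 with h | h
        · obtain rfl : j = 1 := by omega
          rw [norm_iteratedFDeriv_one]
          have h1 := gMap_fderiv c hB (hvs m) y
          have h2 := hv8 m y
          linarith
        · have h1 := gMap_iter c hB (hvs m) h y
          have h2 := hMv' m y j hjk
          linarith)
    have hb1 : ‖iteratedFDeriv ℝ 1 (gMap c B v) y‖ ≤ 1 + 2 * β y := by
      rw [norm_iteratedFDeriv_one]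
      have h1 := gMap_fderiv c hB (hvs m) y
      have h2 := hvβ m y
      linarith
    have hβy := hβ0 y
    have hβy8 := hβ8 y
    have hb2 : ‖iteratedFDeriv ℝ k (pMap A E v) g‖ ≤
        33 / 64 * ‖iteratedFDeriv ℝ k v g‖ + C2 * r (τ y) := by
      refine (hP m g k hk le_rfl).trans ?_
      have : (1 + N * M ^ k) * (CE * r (τ g)) ≤ C2 * r (τ y) := by
        rw [hC2, mul_assoc]
        gcongr
      linarith
    have hb3 : ‖iteratedFDeriv ℝ 1 (pMap A E v) g‖ ≤ 5 / 64 := by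
      rw [norm_iteratedFDeriv_one]
      have h1 := pMap_fderiv hA hE (hvs m) g ((hv8 m g).trans (by norm_num))
      have h2 := hv8 m g
      have h3 := hE1 (g, v g)
      linarith
    have hb4 := gMap_iter c hB (hvs m) hk y
    have hb5 : ‖iteratedFDeriv ℝ k (pMap A E v) g‖ * ‖iteratedFDeriv ℝ 1 (gMap c B v) y‖ ^ k ≤
        33 / 64 * (1 + 2 * β y) ^ k * ‖iteratedFDeriv ℝ k v g‖ + C2 * (5 / 4) ^ k * r (τ y) := by
      calc _ ≤ (33 / 64 * ‖iteratedFDeriv ℝ k v g‖ + C2 * r (τ y)) * (1 + 2 * β y) ^ k := by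
            gcongr
        _ = 33 / 64 * (1 + 2 * β y) ^ k * ‖iteratedFDeriv ℝ k v g‖
            + C2 * (1 + 2 * β y) ^ k * r (τ y) := by ring
        _ ≤ _ := by
            have : (1 + 2 * β y) ≤ 5 / 4 := by linarith
            gcongr
    have hb6 : ‖iteratedFDeriv ℝ 1 (pMap A E v) g‖ * ‖iteratedFDeriv ℝ k (gMap c B v) y‖ ≤
        5 / 64 * (2 * ‖iteratedFDeriv ℝ k v y‖) :=
      mul_le_mul hb3 hb4 (norm_nonneg _) (by norm_num)
    have hnn := norm_nonneg (iteratedFDeriv ℝ k v y)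
    have hb7 : ‖iteratedFDeriv ℝ k (vSeq c B A E (m + 1)) y‖ ≤
      ‖iteratedFDeriv ℝ k (pMap A E v) g‖ * ‖iteratedFDeriv ℝ 1 (gMap c B v) y‖ ^ k
      + ‖iteratedFDeriv ℝ 1 (pMap A E v) g‖ * ‖iteratedFDeriv ℝ k (gMap c B v) y‖
      + N * (CP * r (τ y) * (2 * M + 2) ^ k) := hb
    linarith

theorem core_exists [CompleteSpace V] (c : X) {B : V →L[ℝ] X} (hB : ‖B‖ ≤ 2) {A : V →L[ℝ] V}
    (hA : ‖A‖ ≤ 1 / 2)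
    {E : X × V → V} (hE : ContDiff ℝ (⊤ : ℕ∞) E) (hE1 : ∀ p, ‖fderiv ℝ E p‖ ≤ 1 / 64)
    (hE0 : ∀ p, ‖E p‖ ≤ 1 / 8)
    {τ : X → ℝ} (hτ : ∀ y v, τ ((y + c) + B v) = τ y + 1)
    {r : ℝ → ℝ} (hr : Antitone r) (hr0 : ∀ t, 0 < r t) (hr1 : ∀ t, r t ≤ 1)
    (hrt : Tendsto r atTop (nhds 0))
    (hEk : ∀ k : ℕ, ∃ C : ℝ, ∀ p, ‖iteratedFDeriv ℝ k E p‖ ≤ C * r (τ p.1))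
    (hEx : ∃ C : ℝ, 0 ≤ C ∧ ∀ p, ‖fderiv ℝ E p‖ ≤ C * Real.exp (τ p.1 / 4))
    (π : X) (hper : ∀ x v, E (x + π, v) = E (x, v)) :
    ∃ u : X → V, ContDiff ℝ (⊤ : ℕ∞) u ∧
      (∀ k : ℕ, ∃ C : ℝ, ∀ x, ‖iteratedFDeriv ℝ k u x‖ ≤ C * r (τ x)) ∧
      (∀ x, ‖u x‖ ≤ 1 / 4) ∧ (∀ x, u (x + π) = u x) ∧
      ∀ y, u y = A (u (y + c + B (u y))) + E (y + c + B (u y), u (y + c + B (u y))) := by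
  have hbd := vSeq_bounds c hB hA hE hE1 hτ hr hr0 hr1 hrt hEk hEx
  have hvs := vSeq_smooth c B A hE
  have hv8 := vSeq_fderiv c hB hA hE hE1
  obtain ⟨u, hu, hlim⟩ := smooth_limit (vSeq c B A E) hvs (fun x => rfl)
    (1 / 8) (3 / 4) (by norm_num) (by norm_num) (vSeq_cauchy c hB hA hE hE1 hE0) (fun j => by
      obtain ⟨K, hK⟩ := hbd j
      refine ⟨|K|, fun m x => (hK m x).trans ?_⟩
      have h1 := hr0 (τ x)
      have h2 := hr1 (τ x)
      calc K * r (τ x) ≤ |K| * r (τ x) := by gcongr; exact le_abs_self K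
        _ ≤ |K| * 1 := by gcongr
        _ = |K| := mul_one _)
  have hlim0 : ∀ x, Tendsto (fun m => vSeq c B A E m x) atTop (nhds (u x)) := by
    intro x
    have := hlim 0 x
    simp only [iteratedFDeriv_zero_eq_comp] at this
    have h2 := ((continuousMultilinearCurryFin0 ℝ X V).continuous.tendsto _).comp this
    simpa [Function.comp_def] using h2
  refine ⟨u, hu, fun k => ?_, fun x => ?_, fun x => ?_, fun y => ?_⟩
  · obtain ⟨K, hK⟩ := hbd k
    exact ⟨K, fun x => le_of_tendsto (hlim k x).norm (Eventually.of_forall fun m => hK m x)⟩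
  · refine le_of_tendsto (hlim0 x).norm (Eventually.of_forall fun m => ?_)
    have := vSeq_norm_weight (b := fun _ => 1) (C := 1 / 8) c hA hτ (fun _ => by norm_num)
      antitone_const (by norm_num) (fun p => by simpa using hE0 p) m x
    linarith
  · refine tendsto_nhds_unique (hlim0 (x + π)) ((hlim0 x).congr fun m => ?_)
    have : ∀ m x, vSeq c B A E m (x + π) = vSeq c B A E m x := by
      intro m
      induction m with
      | zero => intro x; rfl
      | succ m ih =>
        intro x
        have hg : gMap c B (vSeq c B A E m) (x + π) = gMap c B (vSeq c B A E m) x + π := by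
          simp only [gMap, ih]; abel
        simp only [vSeq, hg, pMap, ih, hper]
    exact (this m x).symm
  · have h1 : Tendsto (fun m => vSeq c B A E (m + 1) y) atTop (nhds (u y)) :=
      (hlim0 y).comp (tendsto_add_atTop_nat 1)
    set g := y + c + B (u y) with hg
    have h2 : Tendsto (fun m => gMap c B (vSeq c B A E m) y) atTop (nhds g) :=
      ((B.continuous.tendsto _).comp (hlim0 y)).const_add (y + c)
    have h3 : Tendsto (fun m => vSeq c B A E m (gMap c B (vSeq c B A E m) y)) atTop
        (nhds (u g)) := by
      have h4 : Tendsto (fun m => vSeq c B A E m (gMap c B (vSeq c B A E m) y)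
          - vSeq c B A E m g) atTop (nhds 0) := by
        refine squeeze_zero_norm (a := fun m => 1 / 8 * ‖gMap c B (vSeq c B A E m) y - g‖)
          (fun m => lip_of_fderiv (hvs m) (hv8 m) _ _) ?_
        have : Tendsto (fun m => gMap c B (vSeq c B A E m) y - g) atTop (nhds (g - g)) :=
          h2.sub_const g
        have h5 := (this.norm).const_mul (1 / 8 : ℝ)
        rw [sub_self, norm_zero, mul_zero] at h5
        exact h5
      simpa using h4.add (hlim0 g)
    refine tendsto_nhds_unique h1 ?_
    exact ((A.continuous.tendsto _).comp h3).add
      ((hE.continuous.tendsto _).comp (h2.prodMk_nhds h3))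

end Core3

/-- A family of smooth functions with derivatives bounded uniformly in the parameter. -/
def UnifBdd {Y : Type*} [NormedAddCommGroup Y] [NormedSpace ℝ Y] (f : ℝ → Y → ℝ) : Prop :=
  (∀ T, ContDiff ℝ (⊤ : ℕ∞) (f T)) ∧ ∀ n : ℕ, ∃ C : ℝ, ∀ T p, ‖iteratedFDeriv ℝ n (f T) p‖ ≤ C

lemma UnifBdd.mul {Y : Type*} [NormedAddCommGroup Y] [NormedSpace ℝ Y] {f g : ℝ → Y → ℝ}
    (hf : UnifBdd f) (hg : UnifBdd g) : UnifBdd (fun T y => f T y * g T y) := by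
  refine ⟨fun T => (hf.1 T).mul (hg.1 T), fun n => ?_⟩
  choose C hC using hf.2
  choose D hD using hg.2
  refine ⟨∑ i ∈ Finset.range (n + 1), (n.choose i : ℝ) * C i * D (n - i), fun T p => ?_⟩
  refine (norm_iteratedFDeriv_mul_le (hf.1 T) (hg.1 T) p (n := n) (by exact_mod_cast le_top)).trans ?_
  refine Finset.sum_le_sum fun i _ => ?_
  have hCi := hC i T p
  have hDi := hD (n - i) T p
  have h0 := (norm_nonneg _).trans hCi
  gcongr

lemma smoothTransition_bdd (n : ℕ) :
    ∃ C : ℝ, ∀ x, ‖iteratedFDeriv ℝ n Real.smoothTransition x‖ ≤ C := by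
  have hc : ContDiff ℝ (⊤ : ℕ∞) Real.smoothTransition := Real.smoothTransition.contDiff
  have hcont : Continuous (fun x => iteratedFDeriv ℝ n Real.smoothTransition x) :=
    hc.continuous_iteratedFDeriv (by exact_mod_cast le_top)
  obtain ⟨C, hC⟩ := (isCompact_Icc (a := (-1:ℝ)) (b := 2)).exists_bound_of_continuousOn hcont.continuousOn
  have hconst : ∀ (b x : ℝ), ‖iteratedFDeriv ℝ n (fun _ : ℝ => b) x‖ ≤ |b| := by
    intro b x
    rcases Nat.eq_zero_or_pos n with h | h
    · subst h; simp
    · rw [iteratedFDeriv_const_of_ne (by omega)]; simp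
  refine ⟨max C 1, fun x => ?_⟩
  by_cases hx : x ∈ Icc (-1:ℝ) 2
  · exact (hC x hx).trans (le_max_left _ _)
  · refine le_trans ?_ (le_max_right _ _)
    by_cases h0 : x < 0
    · have : Real.smoothTransition =ᶠ[nhds x] fun _ => (0:ℝ) := by
        filter_upwards [Iio_mem_nhds h0] with y hy
        exact Real.smoothTransition.zero_of_nonpos (le_of_lt hy)
      rw [(this.iteratedFDeriv ℝ n).eq_of_nhds]
      exact (hconst 0 x).trans (by simp)
    · have h1 : 1 < x := by
        by_contra hh
        exact hx ⟨by linarith, by linarith⟩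
      have : Real.smoothTransition =ᶠ[nhds x] fun _ => (1:ℝ) := by
        filter_upwards [Ioi_mem_nhds h1] with y hy
        exact Real.smoothTransition.one_of_one_le (le_of_lt hy)
      rw [(this.iteratedFDeriv ℝ n).eq_of_nhds]
      exact (hconst 1 x).trans (by simp)

lemma unifBdd_step {Y : Type*} [NormedAddCommGroup Y] [NormedSpace ℝ Y] (L : Y →L[ℝ] ℝ)
    (b : ℝ → ℝ) : UnifBdd (fun T y => Real.smoothTransition (L y + b T)) := by
  have hc : ContDiff ℝ (⊤ : ℕ∞) Real.smoothTransition := Real.smoothTransition.contDiff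
  have hc' : ∀ T, ContDiff ℝ (⊤ : ℕ∞) (fun x => Real.smoothTransition (x + b T)) :=
    fun T => hc.comp (contDiff_id.add contDiff_const)
  refine ⟨fun T => (hc' T).comp L.contDiff, fun n => ?_⟩
  obtain ⟨C, hC⟩ := smoothTransition_bdd n
  refine ⟨C * ‖L‖ ^ n, fun T p => ?_⟩
  have := L.iteratedFDeriv_comp_right (hc' T) p (i := n) (by exact_mod_cast le_top)
  have h2 : (fun y => Real.smoothTransition (L y + b T)) = (fun x => Real.smoothTransition (x + b T)) ∘ L := rfl
  change ‖iteratedFDeriv ℝ n (fun y => Real.smoothTransition (L y + b T)) p‖ ≤ _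
  rw [h2, this]
  refine (ContinuousMultilinearMap.norm_compContinuousLinearMap_le _ _).trans ?_
  rw [iteratedFDeriv_comp_add_right]
  simp only [Finset.prod_const, Finset.card_univ, Fintype.card_fin]
  gcongr
  exact hC _

lemma exists_cutoff : ∃ κ : ℝ → ℝ × ℝ × ℝ → ℝ, UnifBdd κ ∧
    (∀ T p, p.1 ≤ T → κ T p = 0) ∧ (∀ T p, 3 / 4 ≤ |p.2.2| → κ T p = 0) ∧
    (∀ T p, T + 1 ≤ p.1 → |p.2.2| ≤ 1 / 2 → κ T p = 1) ∧
    ∀ T t φ φ' z, κ T (t, φ, z) = κ T (t, φ', z) := by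
  let L1 : ℝ × ℝ × ℝ →L[ℝ] ℝ := ContinuousLinearMap.fst ℝ ℝ (ℝ × ℝ)
  let L2 : ℝ × ℝ × ℝ →L[ℝ] ℝ :=
    (4:ℝ) • ((ContinuousLinearMap.snd ℝ ℝ ℝ).comp (ContinuousLinearMap.snd ℝ ℝ (ℝ × ℝ)))
  refine ⟨_, ((unifBdd_step L1 (fun T => -T)).mul (unifBdd_step L2 (fun _ => 3))).mul
    (unifBdd_step (-L2) (fun _ => 3)), ?_, ?_, ?_, ?_⟩
  · intro T p h
    simp only [L1, ContinuousLinearMap.coe_fst']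
    rw [Real.smoothTransition.zero_of_nonpos (by linarith)]; simp
  · intro T p h
    simp only [L1, L2, neg_apply, smul_apply,
      ContinuousLinearMap.comp_apply, ContinuousLinearMap.coe_snd', smul_eq_mul]
    rcases le_abs.1 h with h | h
    · rw [Real.smoothTransition.zero_of_nonpos (x := -(4 * p.2.2) + 3) (by linarith)]; simp
    · rw [Real.smoothTransition.zero_of_nonpos (x := (4 * p.2.2) + 3) (by linarith)]; simp
  · intro T p h h2
    simp only [L1, L2, neg_apply, smul_apply,
      ContinuousLinearMap.comp_apply, ContinuousLinearMap.coe_snd', smul_eq_mul, ContinuousLinearMap.coe_fst']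
    have := abs_le.1 h2
    rw [Real.smoothTransition.one_of_one_le (by linarith), Real.smoothTransition.one_of_one_le (by linarith),
      Real.smoothTransition.one_of_one_le (by linarith)]; simp
  · intro T t φ φ' z
    simp [L1, L2]

lemma pertDomain_unique : UniqueDiffOn ℝ pertDomain :=
  (uniqueDiffOn_Ici 1).prod (uniqueDiffOn_univ.prod (uniqueDiffOn_Ioo _ _))

/-- The cut-off perturbation. -/
lemma cut_zero {κ : ℝ × ℝ × ℝ → ℝ} {T : ℝ} (h1 : ∀ p, p.1 ≤ T → κ p = 0)
    (h2 : ∀ p, 3 / 4 ≤ |p.2.2| → κ p = 0) (ε : ℝ × ℝ × ℝ → ℝ) (p : ℝ × ℝ × ℝ)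
    (hp : p.1 < T ∨ 3 / 4 < |p.2.2|) : (fun q => κ q * ε q) =ᶠ[nhds p] fun _ => (0:ℝ) := by
  rcases hp with hp | hp
  · have : ∀ᶠ q : ℝ × ℝ × ℝ in nhds p, q.1 < T := (continuous_fst.tendsto p).eventually (Iio_mem_nhds hp)
    filter_upwards [this] with q hq
    simp [h1 q hq.le]
  · have hc : Continuous fun q : ℝ × ℝ × ℝ => |q.2.2| := by fun_prop
    have : ∀ᶠ q : ℝ × ℝ × ℝ in nhds p, 3 / 4 < |q.2.2| := (hc.tendsto p).eventually (Ioi_mem_nhds hp)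
    filter_upwards [this] with q hq
    simp [h2 q hq.le]

lemma cut_smooth {κ : ℝ × ℝ × ℝ → ℝ} {T : ℝ} (hT : 2 ≤ T) (hκ : ContDiff ℝ (⊤ : ℕ∞) κ)
    (h1 : ∀ p, p.1 ≤ T → κ p = 0)
    (h2 : ∀ p, 3 / 4 ≤ |p.2.2| → κ p = 0) {ε : ℝ × ℝ × ℝ → ℝ}
    (hε : ContDiffOn ℝ (⊤ : ℕ∞) ε pertDomain) : ContDiff ℝ (⊤ : ℕ∞) (fun q => κ q * ε q) := by
  rw [contDiff_iff_contDiffAt]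
  intro p
  by_cases hp : p.1 < T ∨ 3 / 4 < |p.2.2|
  · exact contDiffAt_const.congr_of_eventuallyEq (cut_zero h1 h2 ε p hp)
  · push Not at hp
    refine hκ.contDiffAt.mul (hε.contDiffAt ?_)
    have := abs_le.1 hp.2
    refine prod_mem_nhds (Ici_mem_nhds (by linarith)) (prod_mem_nhds univ_mem (Ioo_mem_nhds (by linarith) (by linarith)))

lemma cut_bound {κ : ℝ → ℝ × ℝ × ℝ → ℝ} (hκ : UnifBdd κ) (h1 : ∀ T p, p.1 ≤ T → κ T p = 0)
    (h2 : ∀ T p, 3 / 4 ≤ |p.2.2| → κ T p = 0) {ε : ℝ × ℝ × ℝ → ℝ} {ρ : ℝ → ℝ}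
    (hρ0 : ∀ t, 0 ≤ t → 0 < ρ t)
    (hε : IsDecayingPert ρ ε) (n : ℕ) : ∃ C : ℝ, 0 ≤ C ∧ ∀ T, 2 ≤ T → ∀ p,
      ‖iteratedFDeriv ℝ n (fun q => κ T q * ε q) p‖ ≤ C * ρ (max p.1 T) := by
  choose C hC using hκ.2
  choose D hD using hε.2.2
  have hC0 : ∀ i, 0 ≤ C i := fun i => (norm_nonneg _).trans (hC i 0 0)
  have hmem : ((1:ℝ), (0:ℝ), (0:ℝ)) ∈ pertDomain := by simp [pertDomain]
  have hD0 : ∀ i, 0 ≤ D i := fun i =>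
    nonneg_of_mul_nonneg_left ((norm_nonneg _).trans (hD i _ hmem)) (hρ0 1 (by norm_num))
  have hS : 0 ≤ ∑ i ∈ Finset.range (n + 1), (n.choose i : ℝ) * C i * D (n - i) :=
    Finset.sum_nonneg fun i _ => mul_nonneg (mul_nonneg (by positivity) (hC0 _)) (hD0 _)
  refine ⟨_, hS, fun T hT p => ?_⟩
  have hr : 0 < ρ (max p.1 T) := hρ0 _ (le_max_of_le_right (by linarith))
  by_cases hp : p.1 < T ∨ 3 / 4 < |p.2.2|
  · rw [((cut_zero (h1 T) (h2 T) ε p hp).iteratedFDeriv ℝ n).eq_of_nhds]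
    have : iteratedFDeriv ℝ n (fun _ : ℝ × ℝ × ℝ => (0:ℝ)) p = 0 := by
      rw [iteratedFDeriv_fun_zero]; rfl
    rw [this, norm_zero]
    exact mul_nonneg hS hr.le
  · push Not at hp
    have hz := abs_le.1 hp.2
    have hpm : p ∈ pertDomain := by
      refine ⟨?_, mem_univ _, ?_, ?_⟩
      · exact show (1:ℝ) ≤ p.1 by linarith
      · linarith
      · linarith
    have hn : (n : WithTop ℕ∞) ≤ ((⊤ : ℕ∞) : WithTop ℕ∞) := by exact_mod_cast le_top
    rw [← iteratedFDerivWithin_eq_iteratedFDeriv pertDomain_unique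
      (((cut_smooth hT (hκ.1 T) (h1 T) (h2 T) hε.1).contDiffAt).of_le hn) hpm]
    refine (norm_iteratedFDerivWithin_mul_le (hκ.1 T).contDiffOn hε.1 pertDomain_unique hpm hn).trans ?_
    rw [Finset.sum_mul]
    refine Finset.sum_le_sum fun i _ => ?_
    rw [iteratedFDerivWithin_eq_iteratedFDeriv pertDomain_unique
      ((hκ.1 T).contDiffAt.of_le (by exact_mod_cast le_top)) hpm, max_eq_left hp.1, mul_assoc _ (D _)]
    have a1 := hC i T p
    have a2 := hD (n - i) p hpm
    have := hC0 i
    gcongr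

/-- The projection `((t,φ),(h,u)) ↦ (t,φ,h)`. -/
noncomputable def projL : (ℝ × ℝ) × (ℝ × ℝ) →L[ℝ] ℝ × ℝ × ℝ :=
  ((ContinuousLinearMap.fst ℝ ℝ ℝ).comp (ContinuousLinearMap.fst ℝ (ℝ × ℝ) (ℝ × ℝ))).prod
    (((ContinuousLinearMap.snd ℝ ℝ ℝ).comp (ContinuousLinearMap.fst ℝ (ℝ × ℝ) (ℝ × ℝ))).prod
      ((ContinuousLinearMap.fst ℝ ℝ ℝ).comp (ContinuousLinearMap.snd ℝ (ℝ × ℝ) (ℝ × ℝ))))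

lemma projL_apply (p : (ℝ × ℝ) × (ℝ × ℝ)) : projL p = (p.1.1, p.1.2, p.2.1) := rfl

lemma projL_norm : ‖projL‖ ≤ 1 := by
  refine ContinuousLinearMap.opNorm_le_bound _ zero_le_one fun p => ?_
  rw [projL_apply, one_mul]
  simp only [Prod.norm_def]
  refine max_le ?_ (max_le ?_ ?_) <;> simp

/-- The perturbation term of the graph-transform equation. -/
noncomputable def pertE (e₁ e₂ : ℝ × ℝ × ℝ → ℝ) (p : (ℝ × ℝ) × (ℝ × ℝ)) : ℝ × ℝ :=
  (e₂ (projL p), -(1 / 2) * e₁ (projL p))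

lemma pertE_smooth {e₁ e₂ : ℝ × ℝ × ℝ → ℝ} (h1 : ContDiff ℝ (⊤ : ℕ∞) e₁)
    (h2 : ContDiff ℝ (⊤ : ℕ∞) e₂) : ContDiff ℝ (⊤ : ℕ∞) (pertE e₁ e₂) :=
  (h2.comp projL.contDiff).prodMk (contDiff_const.mul (h1.comp projL.contDiff))

lemma norm_iter_projL {e : ℝ × ℝ × ℝ → ℝ} (h1 : ContDiff ℝ (⊤ : ℕ∞) e) (n : ℕ)
    (p : (ℝ × ℝ) × (ℝ × ℝ)) :
    ‖iteratedFDeriv ℝ n (fun q => e (projL q)) p‖ ≤ ‖iteratedFDeriv ℝ n e (projL p)‖ := by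
  have := projL.iteratedFDeriv_comp_right h1 p (i := n) (by exact_mod_cast le_top)
  change ‖iteratedFDeriv ℝ n (e ∘ projL) p‖ ≤ _
  rw [this]
  refine (ContinuousMultilinearMap.norm_compContinuousLinearMap_le _ _).trans ?_
  simp only [Finset.prod_const, Finset.card_univ, Fintype.card_fin]
  exact mul_le_of_le_one_right (norm_nonneg _) (pow_le_one₀ (norm_nonneg _) projL_norm)

lemma pertE_bound {e₁ e₂ : ℝ × ℝ × ℝ → ℝ} (h1 : ContDiff ℝ (⊤ : ℕ∞) e₁)
    (h2 : ContDiff ℝ (⊤ : ℕ∞) e₂) (n : ℕ) (p : (ℝ × ℝ) × (ℝ × ℝ)) :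
    ‖iteratedFDeriv ℝ n (pertE e₁ e₂) p‖ ≤
      ‖iteratedFDeriv ℝ n e₁ (projL p)‖ + ‖iteratedFDeriv ℝ n e₂ (projL p)‖ := by
  let i1 : ℝ →L[ℝ] ℝ × ℝ := ContinuousLinearMap.inl ℝ ℝ ℝ
  let i2 : ℝ →L[ℝ] ℝ × ℝ := (-(1 / 2 : ℝ)) • ContinuousLinearMap.inr ℝ ℝ ℝ
  have hi1 : ‖i1‖ ≤ 1 := by
    refine ContinuousLinearMap.opNorm_le_bound _ zero_le_one fun x => ?_
    simp [i1, Prod.norm_def]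
  have hi2 : ‖i2‖ ≤ 1 := by
    refine ContinuousLinearMap.opNorm_le_bound _ zero_le_one fun x => ?_
    simp only [i2, smul_apply, norm_smul]
    have : ‖ContinuousLinearMap.inr ℝ ℝ ℝ x‖ = ‖x‖ := by simp [Prod.norm_def]
    rw [this]
    have : ‖-(1 / 2 : ℝ)‖ ≤ 1 := by norm_num
    gcongr
  have hE : pertE e₁ e₂ = fun q => i2 (e₁ (projL q)) + i1 (e₂ (projL q)) := by
    funext q
    simp [pertE, i1, i2]
  have s1 : ContDiff ℝ (⊤ : ℕ∞) fun q => e₁ (projL q) := h1.comp projL.contDiff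
  have s2 : ContDiff ℝ (⊤ : ℕ∞) fun q => e₂ (projL q) := h2.comp projL.contDiff
  rw [hE]
  refine (norm_iter_add (i2.contDiff.comp s1) (i1.contDiff.comp s2) n p).trans ?_
  refine add_le_add ?_ ?_
  · refine (norm_iter_clm_comp i2 s1 n p).trans ?_
    exact (mul_le_of_le_one_left (norm_nonneg _) hi2).trans (norm_iter_projL h1 n p)
  · refine (norm_iter_clm_comp i1 s2 n p).trans ?_
    exact (mul_le_of_le_one_left (norm_nonneg _) hi1).trans (norm_iter_projL h2 n p)

lemma weight_antitone {ρ : ℝ → ℝ} (hρ : IsWeightFunction ρ) : AntitoneOn ρ (Ici 0) := by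
  have hd : DifferentiableOn ℝ ρ (Ici 0) := hρ.1.differentiableOn (by simp)
  refine antitoneOn_of_deriv_nonpos (convex_Ici 0) hd.continuousOn (hd.mono interior_subset) ?_
  intro x hx
  rw [interior_Ici] at hx
  rw [← derivWithin_of_mem_nhds (Ici_mem_nhds hx)]
  exact hρ.2.2.1 x (show (0:ℝ) ≤ x from le_of_lt hx)

/-- the first-coordinate operator `A(h,u) = (h/2,h/2)` -/
noncomputable def opA : ℝ × ℝ →L[ℝ] ℝ × ℝ :=
  ((1 / 2 : ℝ) • ContinuousLinearMap.fst ℝ ℝ ℝ).prod ((1 / 2 : ℝ) • ContinuousLinearMap.fst ℝ ℝ ℝ)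

/-- `B(h,u) = (0,2u)` -/
noncomputable def opB : ℝ × ℝ →L[ℝ] ℝ × ℝ := (0 : ℝ × ℝ →L[ℝ] ℝ).prod ((2 : ℝ) • ContinuousLinearMap.snd ℝ ℝ ℝ)

lemma opA_apply (v : ℝ × ℝ) : opA v = (1 / 2 * v.1, 1 / 2 * v.1) := rfl

lemma opB_apply (v : ℝ × ℝ) : opB v = (0, 2 * v.2) := rfl

lemma opA_norm : ‖opA‖ ≤ 1 / 2 := by
  refine ContinuousLinearMap.opNorm_le_bound _ (by norm_num) fun v => ?_
  rw [opA_apply]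
  have : ‖v.1‖ ≤ ‖v‖ := norm_fst_le v
  simp only [Prod.norm_def, norm_mul, max_self]
  rw [← Prod.norm_def]
  norm_num
  exact this

lemma opB_norm : ‖opB‖ ≤ 2 := by
  refine ContinuousLinearMap.opNorm_le_bound _ (by norm_num) fun v => ?_
  rw [opB_apply]
  have : ‖v.2‖ ≤ ‖v‖ := norm_snd_le v
  have h2 : ‖((0:ℝ), 2 * v.2)‖ = 2 * ‖v.2‖ := by
    rw [Prod.norm_def]; simp
  rw [h2]; linarith

/-- Existence of the invariant graph for the perturbation
`f(t,φ,z) = (t-1, φ + a - z + ε₁(t,φ,z), z/2 + ε₂(t,φ,z))` of the model map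
`f₀(t,φ,z) = (t-1, φ + a - z, z/2)` on `ℝ × 𝕊¹ × (-1,1)`: there are `t₀ ≥ 1` and a smooth
`2π`-periodic function `h : [t₀,∞) × ℝ → (-1,1)`, with all derivatives `O(ρ(t))`, whose graph
is `f`-invariant. -/
theorem exists_invariant_graph (a : ℝ) (ρ : ℝ → ℝ) (hρ : IsWeightFunction ρ)
    (ε₁ ε₂ : ℝ × ℝ × ℝ → ℝ) (hε₁ : IsDecayingPert ρ ε₁) (hε₂ : IsDecayingPert ρ ε₂) :
    ∃ t₀ : ℝ, 1 ≤ t₀ ∧ ∃ h : ℝ × ℝ → ℝ,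
      (∀ p : ℝ × ℝ, t₀ ≤ p.1 → h p ∈ Ioo (-1:ℝ) 1) ∧
      ContDiffOn ℝ (⊤ : ℕ∞) h (Ici t₀ ×ˢ (univ : Set ℝ)) ∧
      (∀ t φ : ℝ, h (t, φ + 2 * Real.pi) = h (t, φ)) ∧
      (∀ n : ℕ, ∃ C : ℝ, ∀ p ∈ Ici t₀ ×ˢ (univ : Set ℝ),
        ‖iteratedFDerivWithin ℝ n h (Ici t₀ ×ˢ (univ : Set ℝ)) p‖ ≤ C * ρ p.1) ∧
      ∀ t φ : ℝ, t₀ + 1 ≤ t →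
        h (t - 1, φ + a - h (t, φ) + ε₁ (t, φ, h (t, φ)))
          = h (t, φ) / 2 + ε₂ (t, φ, h (t, φ)) := by
  obtain ⟨κ, hκ, hk1, hk2, hk3, hk4⟩ := exists_cutoff
  have hρ0 : ∀ t, 0 ≤ t → 0 < ρ t := fun t ht => hρ.2.1 t ht
  have hanti := weight_antitone hρ
  choose C1 hC1 hD1 using cut_bound hκ hk1 hk2 hρ0 hε₁
  choose C2 hC2 hD2 using cut_bound hκ hk1 hk2 hρ0 hε₂
  -- choice of the threshold
  set M : ℝ := 1 + 8 * (C1 0 + C2 0) + 64 * (C1 1 + C2 1) with hM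
  have hMpos : 0 < M := by
    have := hC1 0; have := hC1 1; have := hC2 0; have := hC2 1
    rw [hM]; linarith
  obtain ⟨T, hT2, hTρ⟩ : ∃ T : ℝ, 2 ≤ T ∧ ρ T < 1 / M := by
    have h1 : ∀ᶠ t in atTop, ρ t < 1 / M := hρ.2.2.2.1.eventually (Iio_mem_nhds (by positivity))
    obtain ⟨T, h⟩ := (h1.and (eventually_ge_atTop 2)).exists
    exact ⟨T, h.2, h.1⟩
  have hTM : M * ρ T < 1 := by
    rw [lt_div_iff₀ hMpos] at hTρ; linarith
  have hρT : 0 < ρ T := hρ0 T (by linarith)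
  have hrT : ∀ t, ρ (max t T) ≤ ρ T := fun t =>
    hanti (show (0:ℝ) ≤ T by linarith) (show (0:ℝ) ≤ max t T from le_max_of_le_right (by linarith)) (le_max_right _ _)
  have p1 := mul_nonneg (hC1 0) hρT.le
  have p2 := mul_nonneg (hC2 0) hρT.le
  have p3 := mul_nonneg (hC1 1) hρT.le
  have p4 := mul_nonneg (hC2 1) hρT.le
  have hMe : ρ T + 8 * (C1 0 * ρ T + C2 0 * ρ T) + 64 * (C1 1 * ρ T + C2 1 * ρ T) < 1 := by
    rw [hM] at hTM; linarith
  set e₁ : ℝ × ℝ × ℝ → ℝ := fun q => κ T q * ε₁ q with he₁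
  set e₂ : ℝ × ℝ × ℝ → ℝ := fun q => κ T q * ε₂ q with he₂
  have s1 : ContDiff ℝ (⊤ : ℕ∞) e₁ := cut_smooth hT2 (hκ.1 T) (hk1 T) (hk2 T) hε₁.1
  have s2 : ContDiff ℝ (⊤ : ℕ∞) e₂ := cut_smooth hT2 (hκ.1 T) (hk1 T) (hk2 T) hε₂.1
  have hEk : ∀ k p, ‖iteratedFDeriv ℝ k (pertE e₁ e₂) p‖ ≤ (C1 k + C2 k) * ρ (max p.1.1 T) := by
    intro k p
    refine (pertE_bound s1 s2 k p).trans ?_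
    rw [add_mul]
    exact add_le_add (hD1 k T hT2 _) (hD2 k T hT2 _)
  have hEkT : ∀ k p, ‖iteratedFDeriv ℝ k (pertE e₁ e₂) p‖ ≤ (C1 k + C2 k) * ρ T := fun k p =>
    (hEk k p).trans (mul_le_mul_of_nonneg_left (hrT _) (add_nonneg (hC1 k) (hC2 k)))
  have hE0 : ∀ p, ‖pertE e₁ e₂ p‖ ≤ 1 / 8 := by
    intro p
    have := hEkT 0 p
    rw [norm_iteratedFDeriv_zero] at this
    linarith
  have hE1 : ∀ p, ‖fderiv ℝ (pertE e₁ e₂) p‖ ≤ 1 / 64 := by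
    intro p
    have := hEkT 1 p
    rw [norm_iteratedFDeriv_one] at this
    linarith
  have hEx : ∀ p, ‖fderiv ℝ (pertE e₁ e₂) p‖ ≤ 1 * Real.exp (p.1.1 / 4) := by
    intro p
    by_cases hp : p.1.1 < T
    · have hev : pertE e₁ e₂ =ᶠ[nhds p] fun _ => (0 : ℝ × ℝ) := by
        have hc : Continuous fun q : (ℝ × ℝ) × (ℝ × ℝ) => q.1.1 := by fun_prop
        have : ∀ᶠ q : (ℝ × ℝ) × (ℝ × ℝ) in nhds p, q.1.1 < T := (hc.tendsto p).eventually (Iio_mem_nhds hp)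
        filter_upwards [this] with q hq
        have h0 : κ T (projL q) = 0 := hk1 T _ hq.le
        simp [pertE, he₁, he₂, h0]
      rw [hev.fderiv_eq]
      simp [Real.exp_nonneg]
    · push Not at hp
      have : 1 ≤ Real.exp (p.1.1 / 4) := Real.one_le_exp (by linarith)
      linarith [hE1 p]
  obtain ⟨u, hu, huk, hu4, hup, hueq⟩ := core_exists (X := ℝ × ℝ) (V := ℝ × ℝ) ((1 : ℝ), -a) opB_norm opA_norm
    (pertE_smooth s1 s2) hE1 hE0 (τ := fun x => x.1) (by intro y v; simp [opB_apply])
    (r := fun t => ρ (max t T))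
    (by
      intro s t hst
      exact hanti (show (0:ℝ) ≤ max s T from le_max_of_le_right (by linarith))
        (show (0:ℝ) ≤ max t T from le_max_of_le_right (by linarith)) (max_le_max_right T hst))
    (fun t => hρ0 _ (le_max_of_le_right (by linarith)))
    (fun t => (hrT t).trans (by linarith))
    (by
      refine hρ.2.2.2.1.congr' ?_
      filter_upwards [eventually_ge_atTop T] with t ht
      rw [max_eq_left ht])
    (fun k => ⟨_, hEk k⟩) ⟨1, zero_le_one, hEx⟩ ((0 : ℝ), 2 * Real.pi)
    (by
      rintro ⟨t, φ⟩ ⟨z, w⟩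
      simp only [pertE, projL_apply, he₁, he₂, Prod.mk_add_mk, add_zero]
      rw [hk4 T t (φ + 2 * Real.pi) φ z, hε₁.2.1, hε₂.2.1])
  have hab : ∀ x, |(u x).1| ≤ 1 / 4 := fun x => (norm_fst_le (u x)).trans (hu4 x)
  have hab2 : ∀ x, |(u x).2| ≤ 1 / 4 := fun x => (norm_snd_le (u x)).trans (hu4 x)
  have hhs : ContDiff ℝ (⊤ : ℕ∞) (fun p => (u p).1) := contDiff_fst.comp hu
  refine ⟨T + 1, by linarith, fun p => (u p).1, ?_, hhs.contDiffOn, ?_, ?_, ?_⟩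
  · intro p _
    have := abs_le.1 (hab p)
    constructor <;> linarith
  · intro t φ
    have := hup (t, φ)
    rw [Prod.mk_add_mk, add_zero] at this
    exact congrArg Prod.fst this
  · intro n
    obtain ⟨C, hC⟩ := huk n
    refine ⟨C, fun p hp => ?_⟩
    have hp1 : T + 1 ≤ p.1 := hp.1
    rw [iteratedFDerivWithin_eq_iteratedFDeriv ((uniqueDiffOn_Ici _).prod uniqueDiffOn_univ)
      (hhs.contDiffAt.of_le (by exact_mod_cast le_top)) hp]
    have h1 := norm_iter_clm_comp (ContinuousLinearMap.fst ℝ ℝ ℝ) hu n p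
    have h2 := hC p
    simp only [max_eq_left (show T ≤ p.1 by linarith)] at h2
    refine h1.trans (le_trans ?_ h2)
    exact mul_le_of_le_one_left (norm_nonneg _) (ContinuousLinearMap.norm_fst_le _ _ _)
  · intro t φ ht
    have hcont : Continuous fun x : ℝ => x - a + 2 * (u (t - 1, x)).2 := by
      have := hu.continuous
      fun_prop
    obtain ⟨ψ, hψ⟩ : ∃ ψ : ℝ, ψ - a + 2 * (u (t - 1, ψ)).2 = φ := by
      refine mem_range_of_exists_le_of_exists_ge hcont ⟨φ + a - 1, ?_⟩ ⟨φ + a + 1, ?_⟩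
      · have := abs_le.1 (hab2 (t - 1, φ + a - 1)); linarith
      · have := abs_le.1 (hab2 (t - 1, φ + a + 1)); linarith
    have hg : ((t - 1, ψ) : ℝ × ℝ) + ((1 : ℝ), -a) + opB (u (t - 1, ψ)) = (t, φ) := by
      rw [opB_apply, Prod.mk_add_mk, Prod.mk_add_mk]
      refine Prod.ext ?_ ?_
      · simp
      · simp only; linarith
    have heq := hueq (t - 1, ψ)
    rw [hg] at heq
    have hk : κ T (t, φ, (u (t, φ)).1) = 1 :=
      hk3 T _ (show T + 1 ≤ t by linarith) ((hab (t, φ)).trans (by norm_num))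
    have q1 := congrArg Prod.fst heq
    have q2 := congrArg Prod.snd heq
    simp only [opA_apply, pertE, projL_apply, he₁, he₂, Prod.mk_add_mk, hk, one_mul] at q1 q2
    have hψ' : φ + a - (u (t, φ)).1 + ε₁ (t, φ, (u (t, φ)).1) = ψ := by linarith
    simp only [hψ']
    rw [q1]; ring
end

section
/- Let a ∈ ℝ, let ρ be a weight function, and let ε₁, ε₂ and f be as follows: ε₁, ε₂ : [1,∞) × ℝ × (−1,1) → ℝ are smooth, 2π-periodic in the second variable, with all partial derivatives bounded by constants times ρ(t), and f(t,φ,z) := (t−1, φ + a − z + ε₁(t,φ,z), z/2 + ε₂(t,φ,z)). Suppose h₁ : [t₁,∞) × ℝ → (−1,1) and h₂ : [t₂,∞) × ℝ → (−1,1) are C¹ functions, 2π-periodic in the second variable, satisfying |h_i(t,φ)| + |∂_t h_i(t,φ)| + |∂_φ h_i(t,φ)| ≤ C ρ(t) for some constant C, and each satisfying the invariance identity h_i(t−1, φ + a − h_i(t,φ) + ε₁(t,φ,h_i(t,φ))) = h_i(t,φ)/2 + ε₂(t,φ,h_i(t,φ)) for all t in its domain with t−1 also in its domain. Then h₁ =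 h₂ on [max(t₁,t₂),∞) × ℝ. -/
open Set Filter

/-- A `C¹`, `2π`-periodic candidate invariant graph `h : [t₁,∞) × ℝ → (-1,1)`, of `C¹`-size
`O(ρ(t))`, whose graph is invariant under
`f(t,φ,z) = (t-1, φ + a - z + ε₁(t,φ,z), z/2 + ε₂(t,φ,z))`. -/
def IsC1InvariantGraph (a : ℝ) (ε₁ ε₂ : ℝ × ℝ × ℝ → ℝ) (ρ : ℝ → ℝ) (t₁ : ℝ)
    (h : ℝ × ℝ → ℝ) : Prop :=
  (∀ p : ℝ × ℝ, t₁ ≤ p.1 → h p ∈ Ioo (-1:ℝ) 1) ∧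
  ContDiffOn ℝ 1 h (Ici t₁ ×ˢ (univ : Set ℝ)) ∧
  (∀ t φ : ℝ, h (t, φ + 2 * Real.pi) = h (t, φ)) ∧
  (∃ C : ℝ, ∀ p ∈ Ici t₁ ×ˢ (univ : Set ℝ),
    |h p| + ‖fderivWithin ℝ h (Ici t₁ ×ˢ (univ : Set ℝ)) p‖ ≤ C * ρ p.1) ∧
  ∀ t φ : ℝ, t₁ + 1 ≤ t →
    h (t - 1, φ + a - h (t, φ) + ε₁ (t, φ, h (t, φ)))
      = h (t, φ) / 2 + ε₂ (t, φ, h (t, φ))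

lemma lip_aux {E : Type*} [NormedAddCommGroup E] [NormedSpace ℝ E] {f : E → ℝ} {s : Set E}
    (hf : DifferentiableOn ℝ f s) {p q : E} (hs : segment ℝ p q ⊆ s) {C : ℝ}
    (hC : ∀ x ∈ segment ℝ p q, ‖fderivWithin ℝ f s x‖ ≤ C) :
    |f q - f p| ≤ C * ‖q - p‖ := by
  have := (convex_segment (𝕜 := ℝ) p q).norm_image_sub_le_of_norm_hasFDerivWithin_le
    (f := f) (f' := fun x => fderivWithin ℝ f s x)
    (fun x hx => ((hf x (hs hx)).hasFDerivWithinAt).mono hs) hC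
    (left_mem_segment ℝ p q) (right_mem_segment ℝ p q)
  simpa using this

lemma pert_lip {ρ : ℝ → ℝ} {ε : ℝ × ℝ × ℝ → ℝ} (hε : IsDecayingPert ρ ε) :
    ∃ C : ℝ, ∀ t φ x y : ℝ, 1 ≤ t → x ∈ Ioo (-1:ℝ) 1 → y ∈ Ioo (-1:ℝ) 1 →
      |ε (t, φ, x) - ε (t, φ, y)| ≤ C * ρ t * |x - y| := by
  obtain ⟨C, hC⟩ := hε.2.2 1
  refine ⟨C, fun t φ x y ht hx hy => ?_⟩
  have hsub : ∀ p ∈ segment ℝ ((t, φ, y) : ℝ × ℝ × ℝ) (t, φ, x), p.1 = t ∧ p ∈ pertDomain := by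
    intro p hp
    have hconv : Convex ℝ pertDomain :=
      (convex_Ici 1).prod (convex_univ.prod (convex_Ioo _ _))
    refine ⟨?_, hconv.segment_subset ?_ ?_ hp⟩
    · obtain ⟨u, v, hu, hv, huv, rfl⟩ := hp
      simp only [Prod.smul_mk, Prod.mk_add_mk, smul_eq_mul]
      rw [← add_mul, huv, one_mul]
    · exact ⟨ht, mem_univ _, hy⟩
    · exact ⟨ht, mem_univ _, hx⟩
  have hud : UniqueDiffOn ℝ pertDomain :=
    (uniqueDiffOn_Ici 1).prod (uniqueDiffOn_univ.prod (uniqueDiffOn_Ioo _ _))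
  have := lip_aux (hε.1.differentiableOn (by simp)) (fun p hp => (hsub p hp).2) (C := C * ρ t)
    (fun p hp => by
      have h := hC p (hsub p hp).2
      rw [(hsub p hp).1] at h
      rwa [norm_iteratedFDerivWithin_one ε (hud p (hsub p hp).2)] at h)
  simpa [Prod.norm_def] using this

lemma graph_lip {a : ℝ} {ε₁ ε₂ : ℝ × ℝ × ℝ → ℝ} {ρ : ℝ → ℝ} {t₁ : ℝ} {h : ℝ × ℝ → ℝ}
    (hh : IsC1InvariantGraph a ε₁ ε₂ ρ t₁ h) :
    ∃ C : ℝ, ∀ t x y : ℝ, t₁ ≤ t → |h (t, x) - h (t, y)| ≤ C * ρ t * |x - y| := by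
  obtain ⟨-, hd, -, ⟨C, hC⟩, -⟩ := hh
  refine ⟨C, fun t x y ht => ?_⟩
  have hsub : ∀ p ∈ segment ℝ ((t, y) : ℝ × ℝ) (t, x),
      p.1 = t ∧ p ∈ Ici t₁ ×ˢ (univ : Set ℝ) := by
    intro p hp
    have hp1 : p.1 = t := by
      obtain ⟨u, v, hu, hv, huv, rfl⟩ := hp
      simp only [Prod.smul_mk, Prod.mk_add_mk, smul_eq_mul]
      rw [← add_mul, huv, one_mul]
    exact ⟨hp1, by simp [hp1, ht]⟩
  have := lip_aux (hd.differentiableOn (by simp)) (fun p hp => (hsub p hp).2) (C := C * ρ t)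
    (fun p hp => by
      have h' := hC p (hsub p hp).2
      rw [(hsub p hp).1] at h'
      linarith [abs_nonneg (h p)])
  simpa [Prod.norm_def] using this

lemma graph_surj {a : ℝ} {ε₁ ε₂ : ℝ × ℝ × ℝ → ℝ} {ρ : ℝ → ℝ} {t₁ : ℝ} {h : ℝ × ℝ → ℝ}
    (ht₁ : 1 ≤ t₁) (hε₁ : IsDecayingPert ρ ε₁)
    (hh : IsC1InvariantGraph a ε₁ ε₂ ρ t₁ h) (t : ℝ) (ht : t₁ ≤ t) (ψ : ℝ) :
    ∃ φ : ℝ, φ + a - h (t, φ) + ε₁ (t, φ, h (t, φ)) = ψ := by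
  obtain ⟨hI, hd, -, -, -⟩ := hh
  obtain ⟨C, hC⟩ := hε₁.2.2 0
  have hdom : ∀ φ, (t, φ, h (t, φ)) ∈ pertDomain := fun φ =>
    ⟨ht₁.trans ht, mem_univ _, hI (t, φ) ht⟩
  have hb : ∀ φ, |ε₁ (t, φ, h (t, φ))| ≤ C * ρ t := fun φ => by
    have := hC _ (hdom φ)
    rwa [norm_iteratedFDerivWithin_zero] at this
  have hch : Continuous fun φ => h (t, φ) :=
    hd.continuousOn.comp_continuous (by fun_prop) (fun φ => ⟨ht, mem_univ _⟩)
  have hce : Continuous fun φ => ε₁ (t, φ, h (t, φ)) :=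
    hε₁.1.continuousOn.comp_continuous (continuous_const.prodMk (continuous_id.prodMk hch)) hdom
  have hc : Continuous fun φ => φ + a - h (t, φ) + ε₁ (t, φ, h (t, φ)) := 
    ((continuous_id.add continuous_const).sub hch).add hce
  refine hc.surjective ?_ ?_ ψ
  · refine tendsto_atTop_mono (f := fun φ => φ + (a - 1 - C * ρ t)) (fun φ => ?_)
      (tendsto_atTop_add_const_right _ _ tendsto_id)
    have h1 := (hI (t, φ) ht).2
    have h2 := (abs_le.1 (hb φ)).1
    linarith
  · refine tendsto_atBot_mono (f := fun φ => φ + (a + 1 + C * ρ t)) (fun φ => ?_)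
      (tendsto_atBot_add_const_right _ _ tendsto_id)
    have h1 := (hI (t, φ) ht).1
    have h2 := (abs_le.1 (hb φ)).2
    linarith

/-- Uniqueness of the invariant graph: two `C¹` invariant graphs of `C¹`-size `O(ρ(t))` for the
perturbed map `f` agree on the common part of their domains. -/
theorem invariant_graph_unique (a : ℝ) (ρ : ℝ → ℝ) (hρ : IsWeightFunction ρ)
    (ε₁ ε₂ : ℝ × ℝ × ℝ → ℝ) (hε₁ : IsDecayingPert ρ ε₁) (hε₂ : IsDecayingPert ρ ε₂)
    (t₁ t₂ : ℝ) (ht₁ : 1 ≤ t₁) (ht₂ : 1 ≤ t₂) (h₁ h₂ : ℝ × ℝ → ℝ)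
    (hh₁ : IsC1InvariantGraph a ε₁ ε₂ ρ t₁ h₁)
    (hh₂ : IsC1InvariantGraph a ε₁ ε₂ ρ t₂ h₂) :
    ∀ t φ : ℝ, max t₁ t₂ ≤ t → h₁ (t, φ) = h₂ (t, φ) := by
  obtain ⟨A, hA⟩ := pert_lip hε₁
  obtain ⟨B, hB⟩ := pert_lip hε₂
  obtain ⟨L, hL⟩ := graph_lip hh₂
  have hlim : ∀ K δ : ℝ, 0 < δ → ∀ᶠ t in atTop, K * ρ t < δ := fun K δ hδ => by
    have := hρ.2.2.2.1.const_mul K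
    rw [mul_zero] at this
    exact this.eventually_lt_const hδ
  obtain ⟨T, hT⟩ := eventually_atTop.1
    ((hlim A 1 one_pos).and ((hlim B (1/8) (by norm_num)).and (hlim L (1/16) (by norm_num))))
  -- contraction step
  have step : ∀ t ψ : ℝ, max t₁ t₂ ≤ t → T ≤ t → ∃ φ,
      |h₁ (t, ψ) - h₂ (t, ψ)| ≤ 3/4 * |h₁ (t + 1, φ) - h₂ (t + 1, φ)| := by
    intro t ψ ht hTt
    have h1t := (le_max_left _ _).trans ht
    have h2t := (le_max_right _ _).trans ht
    obtain ⟨φ, hφ⟩ := graph_surj ht₁ hε₁ hh₁ (t + 1) (by linarith) ψ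
    refine ⟨φ, ?_⟩
    have e1 := hh₁.2.2.2.2 (t + 1) φ (by linarith)
    have e2 := hh₂.2.2.2.2 (t + 1) φ (by linarith)
    rw [hφ] at e1
    simp only [add_sub_cancel_right] at e1 e2
    have i1 := hh₁.1 (t + 1, φ) (by simp; linarith)
    have i2 := hh₂.1 (t + 1, φ) (by simp; linarith)
    have a1 := hA (t + 1) φ _ _ (by linarith) i1 i2
    have b1 := hB (t + 1) φ _ _ (by linarith) i1 i2
    obtain ⟨cA, cB, -⟩ := hT (t + 1) (by linarith)
    obtain ⟨-, -, cL⟩ := hT t hTt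
    have l1 := hL t ψ (φ + a - h₂ (t + 1, φ) + ε₁ (t + 1, φ, h₂ (t + 1, φ))) h2t
    rw [e2] at l1
    rw [e1]
    generalize ε₂ (t + 1, φ, h₁ (t + 1, φ)) = u1 at *
    generalize ε₂ (t + 1, φ, h₂ (t + 1, φ)) = u2 at *
    generalize ε₁ (t + 1, φ, h₁ (t + 1, φ)) = v1 at *
    generalize ε₁ (t + 1, φ, h₂ (t + 1, φ)) = v2 at *
    generalize h₁ (t + 1, φ) = x at *
    generalize h₂ (t + 1, φ) = y at *
    have hw := abs_nonneg (x - y)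
    have a2 : |v1 - v2| ≤ |x - y| := a1.trans (by nlinarith)
    have b2 : |u1 - u2| ≤ 1/8 * |x - y| := b1.trans (by nlinarith)
    have p2 : |ψ - (φ + a - y + v2)| ≤ 2 * |x - y| := by
      have : ψ - (φ + a - y + v2) = -(x - y) + (v1 - v2) := by rw [← hφ]; ring
      rw [this]
      refine (abs_add_le _ _).trans ?_
      rw [abs_neg]; linarith
    have l2 : |h₂ (t, ψ) - (y / 2 + u2)| ≤ 1/8 * |x - y| := by
      refine l1.trans ?_
      have := abs_nonneg (ψ - (φ + a - y + v2))
      nlinarith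
    have : x / 2 + u1 - h₂ (t, ψ) = (x - y) / 2 + (u1 - u2) - (h₂ (t, ψ) - (y / 2 + u2)) := by
      ring
    rw [this]
    refine (abs_sub _ _).trans ?_
    have h3 := abs_add_le ((x - y) / 2) (u1 - u2)
    rw [abs_div, abs_two] at h3
    linarith
  have pw : ∀ n : ℕ, ∀ t ψ : ℝ, max t₁ t₂ ≤ t → T ≤ t →
      |h₁ (t, ψ) - h₂ (t, ψ)| ≤ (3/4) ^ n * 2 := by
    intro n
    induction n with
    | zero =>
      intro t ψ ht _
      have i1 := hh₁.1 (t, ψ) ((le_max_left _ _).trans ht)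
      have i2 := hh₂.1 (t, ψ) ((le_max_right _ _).trans ht)
      rw [abs_le]
      constructor <;> linarith [i1.1, i1.2, i2.1, i2.2]
    | succ n ih =>
      intro t ψ ht hTt
      obtain ⟨φ, hφ⟩ := step t ψ ht hTt
      have := ih (t + 1) φ (by linarith) (by linarith)
      rw [pow_succ]
      linarith
  have large : ∀ t ψ : ℝ, max t₁ t₂ ≤ t → T ≤ t → h₁ (t, ψ) = h₂ (t, ψ) := by
    intro t ψ ht hTt
    have hl : Tendsto (fun n : ℕ => (3/4 : ℝ) ^ n * 2) atTop (nhds 0) := by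
      simpa using (tendsto_pow_atTop_nhds_zero_of_lt_one (r := (3/4 : ℝ))
        (by norm_num) (by norm_num)).mul_const 2
    have := ge_of_tendsto' hl (fun n => pw n t ψ ht hTt)
    exact sub_eq_zero.1 (abs_nonpos_iff.1 this)
  have back : ∀ n : ℕ, ∀ t ψ : ℝ, max t₁ t₂ ≤ t → T ≤ t + n → h₁ (t, ψ) = h₂ (t, ψ) := by
    intro n
    induction n with
    | zero => intro t ψ ht hTt; exact large t ψ ht (by simpa using hTt)
    | succ n ih =>
      intro t ψ ht hTt
      have h1t := (le_max_left _ _).trans ht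
      have h2t := (le_max_right _ _).trans ht
      obtain ⟨φ, hφ⟩ := graph_surj ht₁ hε₁ hh₁ (t + 1) (by linarith) ψ
      have e1 := hh₁.2.2.2.2 (t + 1) φ (by linarith)
      have e2 := hh₂.2.2.2.2 (t + 1) φ (by linarith)
      have := ih (t + 1) φ (by linarith) (by push_cast at hTt; linarith)
      rw [← this, hφ] at e2
      rw [hφ] at e1
      simp only [add_sub_cancel_right] at e1 e2
      rw [e1, e2]
  intro t φ ht
  obtain ⟨n, hn⟩ := exists_nat_ge (T - t)
  exact back n t φ ht (by linarith)
end

section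
/- Let a ∈ ℝ, let ρ and ρ̃ be weight functions, let ε₁, ε₂ : [1,∞) × ℝ × (−1,1) → ℝ be smooth, 2π-periodic in the second variable, with all partial derivatives bounded by constants times ρ(t), and set f(t,φ,z) := (t−1, φ + a − z + ε₁(t,φ,z), z/2 + ε₂(t,φ,z)). Let t₀ ≥ 1 and h : [t₀,∞) × ℝ → (−1,1) be the invariant graph (2π-periodic in φ, with all derivatives O(ρ(t)), whose graph is f-invariant). Let h̃₀ : [t₀,∞) × ℝ → (−1,1) be any C¹ function, 2π-periodic in the second variable, with |h̃₀(t,φ)| + |∂_t h̃₀(t,φ)| + |∂_φ h̃₀(t,φ)| ≤ ρ̃(t). Then, possibly after increasing t₀, the following holds: for each n ∈ ℕ, the set f(graph(h̃_n)) ∩ {t ≥ t₀} is again the graph of a C¹ function h̃_{n+1} : [t₀,∞) × ℝ → (−1,1), 2π-periodic in the second variable, and sup_{t ≥ t₀, φ ∈ ℝ} |h̃_n(t,φ) − h(t,φ)| → 0 as n → ∞. -/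
open Set Filter

/-- The perturbed map `f(t,φ,z) = (t-1, φ + a - z + ε₁(t,φ,z), z/2 + ε₂(t,φ,z))`. -/
noncomputable def pertMap (a : ℝ) (ε₁ ε₂ : ℝ × ℝ × ℝ → ℝ) (p : ℝ × ℝ × ℝ) : ℝ × ℝ × ℝ :=
  (p.1 - 1, p.2.1 + a - p.2.2 + ε₁ p, p.2.2 / 2 + ε₂ p)

/-- The graph `{(t, φ, g(t,φ)) : t ≥ t₀}` of a function `g`. -/
def graphSet (t₀ : ℝ) (g : ℝ × ℝ → ℝ) : Set (ℝ × ℝ × ℝ) :=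
  {p : ℝ × ℝ × ℝ | t₀ ≤ p.1 ∧ p.2.2 = g (p.1, p.2.1)}


/-- The region where everything is controlled. -/
def gtRegion (T : ℝ) : Set (ℝ × ℝ) := {p | T < p.1}

lemma gt_isOpen (T : ℝ) : IsOpen (gtRegion T) := isOpen_lt continuous_const continuous_fst

/-- Quantitative control of a perturbation term beyond `T`. -/
structure GtSmall (T : ℝ) (ε : ℝ × ℝ × ℝ → ℝ) : Prop where
  smooth : ∀ t φ z : ℝ, T < t → |z| < 1 → ContDiffAt ℝ 1 ε (t, φ, z)
  per : ∀ t φ z : ℝ, ε (t, φ + 2 * Real.pi, z) = ε (t, φ, z)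
  bd : ∀ t φ z : ℝ, T < t → |z| < 1 → |ε (t, φ, z)| ≤ 1/100
  lip : ∀ t φ φ' z z' : ℝ, T < t → |z| < 1 → |z'| < 1 →
    |ε (t, φ, z) - ε (t, φ', z')| ≤ 1/100 * (|φ - φ'| + |z - z'|)

/-- Quantitative control of a graph beyond `T`. -/
structure GtGood (T : ℝ) (g : ℝ × ℝ → ℝ) : Prop where
  smooth : ∀ t φ : ℝ, T < t → ContDiffAt ℝ 1 g (t, φ)
  per : ∀ t φ : ℝ, g (t, φ + 2 * Real.pi) = g (t, φ)
  bd : ∀ t φ : ℝ, T < t → |g (t, φ)| ≤ 1/10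
  lip : ∀ t φ φ' : ℝ, T < t → |g (t, φ) - g (t, φ')| ≤ 1/10 * |φ - φ'|

lemma gt_small_eventually {ρ : ℝ → ℝ} (hρ : Tendsto ρ atTop (nhds 0)) (C δ : ℝ) (hδ : 0 < δ) :
    ∀ᶠ T in atTop, ∀ t, T < t → C * ρ t ≤ δ := by
  have h1 : Tendsto (fun t => C * ρ t) atTop (nhds 0) := by simpa using hρ.const_mul C
  have h2 : ∀ᶠ t in atTop, C * ρ t ≤ δ := (h1.eventually (gt_mem_nhds hδ)).mono fun t ht => ht.le
  obtain ⟨A, hA⟩ := eventually_atTop.1 h2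
  filter_upwards [eventually_ge_atTop A] with T hT t ht
  exact hA t (hT.trans ht.le)

lemma gt_pert_small {ρ : ℝ → ℝ} (hρ : Tendsto ρ atTop (nhds 0)) {ε : ℝ × ℝ × ℝ → ℝ}
    (hε : IsDecayingPert ρ ε) : ∀ᶠ T in atTop, GtSmall T ε := by
  obtain ⟨hs, hp, hd⟩ := hε
  obtain ⟨C0, h0⟩ := hd 0
  obtain ⟨C1, h1⟩ := hd 1
  filter_upwards [gt_small_eventually hρ C0 (1/100) (by norm_num),
    gt_small_eventually hρ C1 (1/100) (by norm_num), eventually_ge_atTop 1] with T hT0 hT1 hT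
  have hsub : ∀ t φ z : ℝ, T < t → |z| < 1 → (t, φ, z) ∈ pertDomain := fun t φ z ht hz =>
    ⟨hT.trans ht.le, mem_univ _, abs_lt.1 hz⟩
  refine ⟨?_, hp, ?_, ?_⟩
  · intro t φ z ht hz
    refine (hs.of_le (by exact_mod_cast le_top)).contDiffAt ?_
    refine prod_mem_nhds (Ici_mem_nhds (hT.trans_lt ht)) (prod_mem_nhds univ_mem ?_)
    exact Ioo_mem_nhds (abs_lt.1 hz).1 (abs_lt.1 hz).2
  · intro t φ z ht hz
    have := h0 _ (hsub t φ z ht hz)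
    rw [norm_iteratedFDerivWithin_zero] at this
    exact this.trans (hT0 t ht)
  · intro t φ φ' z z' ht hz hz'
    have hconv : Convex ℝ (({t} : Set ℝ) ×ˢ ((univ : Set ℝ) ×ˢ Ioo (-1:ℝ) 1)) :=
      (convex_singleton t).prod (convex_univ.prod (convex_Ioo _ _))
    have hss : (({t} : Set ℝ) ×ˢ ((univ : Set ℝ) ×ˢ Ioo (-1:ℝ) 1)) ⊆ pertDomain := by
      rintro ⟨x, y, w⟩ ⟨hx, -, hw⟩
      simp only [mem_singleton_iff] at hx
      subst hx
      exact ⟨hT.trans ht.le, mem_univ _, hw⟩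
    have key := hconv.norm_image_sub_le_of_norm_hasFDerivWithin_le (f := ε)
      (f' := fderivWithin ℝ ε pertDomain) (C := 1/100) (x := (t, φ', z')) (y := (t, φ, z))
      (fun x hx => ((hs.differentiableOn (by simp)) x (hss hx)).hasFDerivWithinAt.mono hss)
      (fun x hx => by
        have hx1 : x.1 = t := hx.1
        have hud : UniqueDiffOn ℝ pertDomain :=
          (uniqueDiffOn_Ici 1).prod (uniqueDiffOn_univ.prod (uniqueDiffOn_Ioo _ _))
        have := h1 x (hss hx)
        rw [norm_iteratedFDerivWithin_one _ (hud x (hss hx))] at this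
        exact this.trans (hT1 _ (hx1 ▸ ht)))
      ⟨rfl, mem_univ _, abs_lt.1 hz'⟩ ⟨rfl, mem_univ _, abs_lt.1 hz⟩
    rw [Real.norm_eq_abs] at key
    refine key.trans (mul_le_mul_of_nonneg_left ?_ (by norm_num))
    simp only [Prod.mk_sub_mk, Prod.norm_mk, Real.norm_eq_abs, sub_self, abs_zero]
    have := abs_nonneg (φ - φ')
    have := abs_nonneg (z - z')
    exact max_le (by linarith) (max_le (by linarith) (by linarith))

lemma gt_graph_small {ρ : ℝ → ℝ} (hρ : Tendsto ρ atTop (nhds 0)) {g : ℝ × ℝ → ℝ} {t₀ C : ℝ}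
    (hs : ContDiffOn ℝ 1 g (Ici t₀ ×ˢ (univ : Set ℝ)))
    (hp : ∀ t φ : ℝ, g (t, φ + 2 * Real.pi) = g (t, φ))
    (hd : ∀ p ∈ Ici t₀ ×ˢ (univ : Set ℝ),
      |g p| ≤ C * ρ p.1 ∧ ‖fderivWithin ℝ g (Ici t₀ ×ˢ (univ : Set ℝ)) p‖ ≤ C * ρ p.1) :
    ∀ᶠ T in atTop, GtGood T g := by
  filter_upwards [gt_small_eventually hρ C (1/10) (by norm_num), eventually_ge_atTop t₀]
    with T hT0 hT
  refine ⟨?_, hp, ?_, ?_⟩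
  · intro t φ ht
    exact hs.contDiffAt (prod_mem_nhds (Ici_mem_nhds (hT.trans_lt ht)) univ_mem)
  · intro t φ ht
    exact (hd (t, φ) ⟨hT.trans ht.le, mem_univ _⟩).1.trans (hT0 t ht)
  · intro t φ φ' ht
    have hconv : Convex ℝ (({t} : Set ℝ) ×ˢ (univ : Set ℝ)) :=
      (convex_singleton t).prod convex_univ
    have hss : (({t} : Set ℝ) ×ˢ (univ : Set ℝ)) ⊆ Ici t₀ ×ˢ (univ : Set ℝ) := by
      rintro ⟨x, y⟩ ⟨hx, -⟩
      simp only [mem_singleton_iff] at hx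
      subst hx
      exact ⟨hT.trans ht.le, mem_univ _⟩
    have key := hconv.norm_image_sub_le_of_norm_hasFDerivWithin_le (f := g)
      (f' := fderivWithin ℝ g (Ici t₀ ×ˢ (univ : Set ℝ))) (C := 1/10) (x := (t, φ')) (y := (t, φ))
      (fun x hx => ((hs.differentiableOn (by simp)) x (hss hx)).hasFDerivWithinAt.mono hss)
      (fun x hx => by
        have hx1 : x.1 = t := hx.1
        exact (hd x (hss hx)).2.trans (hT0 _ (hx1 ▸ ht)))
      ⟨rfl, mem_univ _⟩ ⟨rfl, mem_univ _⟩
    rw [Real.norm_eq_abs] at key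
    refine key.trans (mul_le_mul_of_nonneg_left ?_ (by norm_num))
    simp only [Prod.mk_sub_mk, Prod.norm_mk, Real.norm_eq_abs, sub_self, abs_zero]
    exact max_le (abs_nonneg _) le_rfl

/-- One step of the graph transform. -/
lemma gt_step (a T : ℝ) {ε₁ ε₂ : ℝ × ℝ × ℝ → ℝ} (h₁ : GtSmall T ε₁) (h₂ : GtSmall T ε₂)
    {g : ℝ × ℝ → ℝ} (hg : GtGood T g) :
    ∃ g' : ℝ × ℝ → ℝ, GtGood T g' ∧
      (∀ t φ : ℝ, T + 1 < t → g' (t - 1, φ + a - g (t, φ) + ε₁ (t, φ, g (t, φ))) =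
        g (t, φ) / 2 + ε₂ (t, φ, g (t, φ))) ∧
      (∀ t ψ : ℝ, T + 1 < t → ∃ φ, φ + a - g (t, φ) + ε₁ (t, φ, g (t, φ)) = ψ) := by
  classical
  have hg1 : ∀ t φ : ℝ, T < t → |g (t, φ)| < 1 := fun t φ ht =>
    (hg.bd t φ ht).trans_lt (by norm_num)
  have hcomp : ∀ {ε : ℝ × ℝ × ℝ → ℝ}, GtSmall T ε → ∀ t φ : ℝ, T < t →
      ContDiffAt ℝ 1 (fun p : ℝ × ℝ => ε (p.1, p.2, g p)) (t, φ) := by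
    intro ε hε t φ ht
    exact ContDiffAt.comp (t, φ) (f := fun p : ℝ × ℝ => (p.1, p.2, g p))
      (hε.smooth t φ _ ht (hg1 t φ ht))
      (contDiffAt_fst.prodMk (contDiffAt_snd.prodMk (hg.smooth t φ ht)))
  have hclip : ∀ {ε : ℝ × ℝ × ℝ → ℝ}, GtSmall T ε → ∀ t φ φ' : ℝ, T < t →
      |ε (t, φ, g (t, φ)) - ε (t, φ', g (t, φ'))| ≤ 11/1000 * |φ - φ'| := by
    intro ε hε t φ φ' ht
    have := hε.lip t φ φ' _ _ ht (hg1 t φ ht) (hg1 t φ' ht)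
    have := hg.lip t φ φ' ht
    linarith
  set r : ℝ × ℝ → ℝ := fun p => ε₁ (p.1, p.2, g p) - g p with hr
  set Φ : ℝ × ℝ → ℝ := fun p => p.2 + a + r p with hΦ
  have hrs : ∀ t φ : ℝ, T < t → ContDiffAt ℝ 1 r (t, φ) := fun t φ ht =>
    (hcomp h₁ t φ ht).sub (hg.smooth t φ ht)
  have hΦs : ∀ t φ : ℝ, T < t → ContDiffAt ℝ 1 Φ (t, φ) := fun t φ ht =>
    (contDiffAt_snd.add contDiffAt_const).add (hrs t φ ht)
  have hrlip : ∀ t φ φ' : ℝ, T < t → |r (t, φ) - r (t, φ')| ≤ 111/1000 * |φ - φ'| := by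
    intro t φ φ' ht
    have e1 := abs_le.1 (hclip h₁ t φ φ' ht)
    have e2 := abs_le.1 (hg.lip t φ φ' ht)
    simp only [hr]
    exact abs_le.2 ⟨by linarith [e1.1, e2.2], by linarith [e1.2, e2.1]⟩
  have hrbd : ∀ t φ : ℝ, T < t → |r (t, φ)| ≤ 1 := by
    intro t φ ht
    have e1 := abs_le.1 (h₁.bd t φ _ ht (hg1 t φ ht))
    have e2 := abs_le.1 (hg.bd t φ ht)
    simp only [hr]
    exact abs_le.2 ⟨by linarith [e1.1, e2.2], by linarith [e1.2, e2.1]⟩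
  have hΦlow : ∀ t φ φ' : ℝ, T < t → 889/1000 * |φ - φ'| ≤ |Φ (t, φ) - Φ (t, φ')| := by
    intro t φ φ' ht
    have e1 := hrlip t φ φ' ht
    have e2 : φ - φ' = (Φ (t, φ) - Φ (t, φ')) - (r (t, φ) - r (t, φ')) := by
      simp only [hΦ]; ring
    have e3 : |φ - φ'| ≤ |Φ (t, φ) - Φ (t, φ')| + |r (t, φ) - r (t, φ')| := by
      conv_lhs => rw [e2]
      exact abs_sub _ _
    linarith
  have hΦinj : ∀ t φ φ' : ℝ, T < t → Φ (t, φ) = Φ (t, φ') → φ = φ' := by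
    intro t φ φ' ht he
    have := hΦlow t φ φ' ht
    rw [he, sub_self, abs_zero] at this
    have h0 : |φ - φ'| = 0 := le_antisymm (by linarith) (abs_nonneg _)
    exact sub_eq_zero.1 (abs_eq_zero.1 h0)
  have hΦsurj : ∀ t ψ : ℝ, T < t → ∃ φ, Φ (t, φ) = ψ := by
    intro t ψ ht
    have hc : Continuous fun φ : ℝ => Φ (t, φ) := by
      rw [continuous_iff_continuousAt]
      intro φ
      exact ContinuousAt.comp (f := fun φ : ℝ => (t, φ)) (hΦs t φ ht).continuousAt
        (by fun_prop)
    have := intermediate_value_Icc (a := ψ - a - 1) (b := ψ - a + 1) (by linarith)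
      hc.continuousOn
    obtain ⟨φ, -, hφ⟩ := this (show ψ ∈ Icc _ _ from by
      have e1 := abs_le.1 (hrbd t (ψ - a - 1) ht)
      have e2 := abs_le.1 (hrbd t (ψ - a + 1) ht)
      simp only [hΦ]
      exact ⟨by linarith [e1.2], by linarith [e2.1]⟩)
    exact ⟨φ, hφ⟩
  choose! σ hσ using hΦsurj
  have hσ' : ∀ t φ : ℝ, T < t → σ t (Φ (t, φ)) = φ := fun t φ ht =>
    hΦinj t _ _ ht (hσ t _ ht)
  have hΦper : ∀ t φ : ℝ, Φ (t, φ + 2 * Real.pi) = Φ (t, φ) + 2 * Real.pi := by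
    intro t φ
    simp only [hΦ, hr, hg.per, h₁.per]; ring
  have hσper : ∀ t ψ : ℝ, T < t → σ t (ψ + 2 * Real.pi) = σ t ψ + 2 * Real.pi := by
    intro t ψ ht
    apply hΦinj t _ _ ht
    rw [hσ t _ ht, hΦper, hσ t _ ht]
  have hσs : ∀ t ψ : ℝ, T < t → ContDiffAt ℝ 1 (fun p : ℝ × ℝ => σ p.1 p.2) (t, ψ) := by
    intro t ψ ht
    set φ := σ t ψ with hφ
    set F : ℝ × ℝ → ℝ × ℝ := fun p => (p.1, Φ p) with hF
    have hFa : F (t, φ) = (t, ψ) := by simp only [hF, hφ, hσ t ψ ht]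
    have hFs : ContDiffAt ℝ 1 F (t, φ) := contDiffAt_fst.prodMk (hΦs t φ ht)
    have hrd := ((hrs t φ ht).differentiableAt (by simp)).hasFDerivAt
    set R := fderiv ℝ r (t, φ) with hR
    have hR1 : |R (0, 1)| ≤ 111/1000 := by
      have hd : HasDerivAt (fun x : ℝ => r (t, x)) (R (0, 1)) φ :=
        HasFDerivAt.comp_hasDerivAt (f := fun x : ℝ => (t, x)) φ hrd
          ((hasDerivAt_const φ t).prodMk (hasDerivAt_id φ))
      have := hd.le_of_lip' (C := 111/1000) (by norm_num)
        (Eventually.of_forall fun x => by simpa using hrlip t x φ ht)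
      simpa using this
    have hFd : HasFDerivAt F ((ContinuousLinearMap.fst ℝ ℝ ℝ).prod
        (ContinuousLinearMap.snd ℝ ℝ ℝ + R)) (t, φ) :=
      hasFDerivAt_fst.prodMk ((hasFDerivAt_snd.add_const a).add hrd)
    set L := (ContinuousLinearMap.fst ℝ ℝ ℝ).prod (ContinuousLinearMap.snd ℝ ℝ ℝ + R) with hL
    have hLinj : Function.Injective (L : ℝ × ℝ →ₗ[ℝ] ℝ × ℝ) := by
      rw [injective_iff_map_eq_zero]
      rintro ⟨x, y⟩ hxy
      have e1 : x = 0 := congrArg Prod.fst hxy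
      have e2 : y + R (x, y) = 0 := congrArg Prod.snd hxy
      subst e1
      have e3 : R (0, y) = y * R (0, 1) := by
        have : ((0:ℝ), y) = y • ((0:ℝ), (1:ℝ)) := by simp
        rw [this, map_smul, smul_eq_mul]
      have e4 : y * (1 + R (0, 1)) = 0 := by rw [e3] at e2; linarith
      have e5 : 1 + R (0, 1) ≠ 0 := by
        have := (abs_le.1 hR1).1
        intro h0; linarith
      have e6 : y = 0 := (mul_eq_zero.1 e4).resolve_right e5
      simp [e6]
    let E : (ℝ × ℝ) ≃L[ℝ] (ℝ × ℝ) :=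
      (LinearEquiv.ofInjectiveEndo (L : ℝ × ℝ →ₗ[ℝ] ℝ × ℝ) hLinj).toContinuousLinearEquiv
    have hEL : (E : ℝ × ℝ →L[ℝ] ℝ × ℝ) = L := by
      apply ContinuousLinearMap.ext
      intro x
      rfl
    have hFd' : HasFDerivAt F (E : ℝ × ℝ →L[ℝ] ℝ × ℝ) (t, φ) := by rw [hEL]; exact hFd
    have hinvs := hFs.to_localInverse hFd' (by simp)
    have hst : HasStrictFDerivAt F (E : ℝ × ℝ →L[ℝ] ℝ × ℝ) (t, φ) :=
      hFs.hasStrictFDerivAt' hFd' (by simp)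
    have hev := hst.eventually_right_inverse
    rw [hFa] at hinvs hev
    have hsnd : ContDiffAt ℝ 1 (fun p => (hFs.localInverse hFd' (by simp) p).2) (t, ψ) :=
      contDiffAt_snd.comp (t, ψ) hinvs
    refine hsnd.congr_of_eventuallyEq ?_
    filter_upwards [hev, (gt_isOpen T).mem_nhds (show (t, ψ) ∈ gtRegion T from ht)] with p hp hpT
    have hpT' : T < p.1 := hpT
    change σ p.1 p.2 = (hst.localInverse F E (t, φ) p).2
    set q := hst.localInverse F E (t, φ) p with hq
    have q1 : (F q).1 = p.1 := by rw [show F q = p from hp]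
    change q.1 = p.1 at q1
    have q2 : Φ q = p.2 := congrArg Prod.snd (show F q = p from hp)
    have : Φ (p.1, q.2) = p.2 := by rw [← q1]; exact q2
    rw [← this]
    exact hσ' _ _ hpT'
  let g' : ℝ × ℝ → ℝ := fun p => if T < p.1 then
    (fun q : ℝ × ℝ => g q / 2 + ε₂ (q.1, q.2, g q)) (p.1 + 1, σ (p.1 + 1) p.2) else 0
  have hg' : ∀ s ψ : ℝ, T < s → g' (s, ψ) = g (s + 1, σ (s + 1) ψ) / 2 +
      ε₂ (s + 1, σ (s + 1) ψ, g (s + 1, σ (s + 1) ψ)) := fun s ψ hs => if_pos hs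
  refine ⟨g', ⟨?_, ?_, ?_, ?_⟩, ?_, ?_⟩
  · intro s ψ hs
    have hs1 : T < s + 1 := by linarith
    have hin : ContDiffAt ℝ 1 (fun p : ℝ × ℝ => (p.1 + 1, σ (p.1 + 1) p.2)) (s, ψ) := by
      refine (contDiffAt_fst.add contDiffAt_const).prodMk ?_
      exact ContDiffAt.comp (s, ψ) (f := fun p : ℝ × ℝ => (p.1 + 1, p.2)) (hσs (s+1) ψ hs1)
        ((contDiffAt_fst.add contDiffAt_const).prodMk contDiffAt_snd)
    have hout : ContDiffAt ℝ 1 (fun q : ℝ × ℝ => g q / 2 + ε₂ (q.1, q.2, g q))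
        (s + 1, σ (s + 1) ψ) :=
      ((hg.smooth _ _ hs1).div_const 2).add (hcomp h₂ _ _ hs1)
    have := ContDiffAt.comp (s, ψ) (f := fun p : ℝ × ℝ => (p.1 + 1, σ (p.1 + 1) p.2)) hout hin
    refine this.congr_of_eventuallyEq ?_
    filter_upwards [(gt_isOpen T).mem_nhds (show (s, ψ) ∈ gtRegion T from hs)] with p hp
    exact if_pos hp
  · intro s ψ
    by_cases hs : T < s
    · rw [hg' _ _ hs, hg' _ _ hs, hσper _ _ (by linarith), hg.per, h₂.per]
    · simp [g', hs]
  · intro s ψ hs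
    rw [hg' _ _ hs]
    have hs1 : T < s + 1 := by linarith
    have e1 := abs_le.1 (h₂.bd (s+1) (σ (s + 1) ψ) _ hs1 (hg1 _ (σ (s + 1) ψ) hs1))
    have e2 := abs_le.1 (hg.bd (s+1) (σ (s + 1) ψ) hs1)
    exact abs_le.2 ⟨by linarith [e1.1, e2.1], by linarith [e1.2, e2.2]⟩
  · intro s ψ ψ' hs
    rw [hg' _ _ hs, hg' _ _ hs]
    have hs1 : T < s + 1 := by linarith
    have e0 := hΦlow (s+1) (σ (s + 1) ψ) (σ (s + 1) ψ') hs1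
    rw [hσ _ _ hs1, hσ _ _ hs1] at e0
    have e1 := abs_le.1 (hclip h₂ (s+1) (σ (s + 1) ψ) (σ (s + 1) ψ') hs1)
    have e2 := abs_le.1 (hg.lip (s+1) (σ (s + 1) ψ) (σ (s + 1) ψ') hs1)
    have e3 := abs_nonneg (ψ - ψ')
    exact abs_le.2 ⟨by linarith [e1.1, e2.1], by linarith [e1.2, e2.2]⟩
  · intro t φ ht
    have e : φ + a - g (t, φ) + ε₁ (t, φ, g (t, φ)) = Φ (t, φ) := by simp only [hΦ, hr]; ring
    rw [e, hg' _ _ (by linarith), sub_add_cancel, hσ' _ _ (by linarith)]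
  · intro t ψ ht
    refine ⟨σ t ψ, ?_⟩
    have := hσ t ψ (by linarith)
    rw [← this]
    simp only [hΦ, hr]
    rw [show σ t (σ t ψ + a + (ε₁ (t, σ t ψ, g (t, σ t ψ)) - g (t, σ t ψ))) = σ t ψ from
      hσ' t (σ t ψ) (by linarith)]
    ring

/-- Convergence of the graph transform: starting from any `C¹` graph `h̃₀` of `C¹`-size `ρ̃(t)`,
the iterated images under `f`, intersected with `{t ≥ t₀}` (after possibly increasing `t₀`),
remain `C¹` graphs and converge uniformly to the invariant graph `h`. -/
theorem graph_transform_converges (a : ℝ) (ρ ρ' : ℝ → ℝ)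
    (hρ : IsWeightFunction ρ) (hρ' : IsWeightFunction ρ')
    (ε₁ ε₂ : ℝ × ℝ × ℝ → ℝ) (hε₁ : IsDecayingPert ρ ε₁) (hε₂ : IsDecayingPert ρ ε₂)
    (t₀ : ℝ) (ht₀ : 1 ≤ t₀) (h : ℝ × ℝ → ℝ)
    -- `h` is the invariant graph: maps into `(-1,1)`, smooth, `2π`-periodic, all derivatives
    -- `O(ρ(t))`, and its graph is `f`-invariant
    (hmem : ∀ p : ℝ × ℝ, t₀ ≤ p.1 → h p ∈ Ioo (-1:ℝ) 1)
    (hsmooth : ContDiffOn ℝ (⊤ : ℕ∞) h (Ici t₀ ×ˢ (univ : Set ℝ)))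
    (hper : ∀ t φ : ℝ, h (t, φ + 2 * Real.pi) = h (t, φ))
    (hdecay : ∀ n : ℕ, ∃ C : ℝ, ∀ p ∈ Ici t₀ ×ˢ (univ : Set ℝ),
      ‖iteratedFDerivWithin ℝ n h (Ici t₀ ×ˢ (univ : Set ℝ)) p‖ ≤ C * ρ p.1)
    (hinv : ∀ t φ : ℝ, t₀ + 1 ≤ t →
      h (t - 1, φ + a - h (t, φ) + ε₁ (t, φ, h (t, φ))) = h (t, φ) / 2 + ε₂ (t, φ, h (t, φ)))
    -- the initial graph `h̃₀`
    (g₀ : ℝ × ℝ → ℝ)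
    (hg₀mem : ∀ p : ℝ × ℝ, t₀ ≤ p.1 → g₀ p ∈ Ioo (-1:ℝ) 1)
    (hg₀C1 : ContDiffOn ℝ 1 g₀ (Ici t₀ ×ˢ (univ : Set ℝ)))
    (hg₀per : ∀ t φ : ℝ, g₀ (t, φ + 2 * Real.pi) = g₀ (t, φ))
    (hg₀size : ∀ p ∈ Ici t₀ ×ˢ (univ : Set ℝ),
      |g₀ p| + ‖fderivWithin ℝ g₀ (Ici t₀ ×ˢ (univ : Set ℝ)) p‖ ≤ ρ' p.1) :
    ∃ t₀' : ℝ, t₀ ≤ t₀' ∧ ∃ g : ℕ → ℝ × ℝ → ℝ,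
      (∀ p : ℝ × ℝ, t₀' ≤ p.1 → g 0 p = g₀ p) ∧
      (∀ n : ℕ,
        (∀ p : ℝ × ℝ, t₀' ≤ p.1 → g n p ∈ Ioo (-1:ℝ) 1) ∧
        ContDiffOn ℝ 1 (g n) (Ici t₀' ×ˢ (univ : Set ℝ)) ∧
        (∀ t φ : ℝ, g n (t, φ + 2 * Real.pi) = g n (t, φ))) ∧
      (∀ n : ℕ,
        pertMap a ε₁ ε₂ '' graphSet t₀' (g n) ∩ {p : ℝ × ℝ × ℝ | t₀' ≤ p.1}
          = graphSet t₀' (g (n + 1))) ∧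
      ∀ δ : ℝ, 0 < δ → ∃ N : ℕ, ∀ n : ℕ, N ≤ n →
        ∀ p : ℝ × ℝ, t₀' ≤ p.1 → |g n p - h p| ≤ δ := by
  obtain ⟨C0, hC0⟩ := hdecay 0
  obtain ⟨C1, hC1⟩ := hdecay 1
  have hud : UniqueDiffOn ℝ (Ici t₀ ×ˢ (univ : Set ℝ)) :=
    (uniqueDiffOn_Ici t₀).prod uniqueDiffOn_univ
  have evh : ∀ᶠ T in atTop, GtGood T h := by
    refine gt_graph_small hρ.2.2.2.1 (C := max C0 C1) (hsmooth.of_le (by exact_mod_cast le_top))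
      hper ?_
    intro p hp
    have hpos : 0 < ρ p.1 := hρ.2.1 _ (by
      have : t₀ ≤ p.1 := hp.1
      exact mem_Ici.2 (by linarith))
    have a0 := hC0 p hp
    have a1 := hC1 p hp
    rw [norm_iteratedFDerivWithin_zero] at a0
    rw [norm_iteratedFDerivWithin_one _ (hud p hp)] at a1
    exact ⟨a0.trans (mul_le_mul_of_nonneg_right (le_max_left _ _) hpos.le),
      a1.trans (mul_le_mul_of_nonneg_right (le_max_right _ _) hpos.le)⟩
  have evg : ∀ᶠ T in atTop, GtGood T g₀ := by
    refine gt_graph_small hρ'.2.2.2.1 (C := 1) hg₀C1 hg₀per ?_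
    intro p hp
    have b := hg₀size p hp
    have b1 := abs_nonneg (g₀ p)
    have b2 := norm_nonneg (fderivWithin ℝ g₀ (Ici t₀ ×ˢ (univ : Set ℝ)) p)
    exact ⟨by linarith, by linarith⟩
  obtain ⟨T, hTh, hTg, hT1, hT2, hT⟩ := (evh.and (evg.and ((gt_pert_small hρ.2.2.2.1 hε₁).and
    ((gt_pert_small hρ.2.2.2.1 hε₂).and (eventually_ge_atTop t₀))))).exists
  choose G hG1 hG2 hG3 using fun g : {g : ℝ × ℝ → ℝ // GtGood T g} => gt_step a T hT1 hT2 g.2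
  let S : {g : ℝ × ℝ → ℝ // GtGood T g} → {g : ℝ × ℝ → ℝ // GtGood T g} := fun g => ⟨G g, hG1 g⟩
  let γ : ℕ → {g : ℝ × ℝ → ℝ // GtGood T g} := fun n => S^[n] ⟨g₀, hTg⟩
  have hγ : ∀ n, (γ (n + 1)).1 = G (γ n) := by
    intro n
    simp only [γ, Function.iterate_succ_apply']
    rfl
  refine ⟨T + 1, by linarith, fun n => (γ n).1, fun p _ => rfl, ?_, ?_, ?_⟩
  · intro n
    refine ⟨?_, ?_, (γ n).2.per⟩
    · rintro ⟨t, φ⟩ hp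
      have hp' : T + 1 ≤ t := hp
      have := abs_le.1 ((γ n).2.bd t φ (by linarith))
      exact ⟨by linarith [this.1], by linarith [this.2]⟩
    · rintro ⟨t, φ⟩ hp
      have hp' : T + 1 ≤ t := hp.1
      exact ((γ n).2.smooth t φ (by linarith)).contDiffWithinAt
  · intro n
    ext ⟨s, ψ, w⟩
    constructor
    · rintro ⟨⟨⟨t, φ, z⟩, ⟨ht, hz⟩, hf⟩, hs⟩
      have hs' : T + 1 ≤ s := hs
      have hz' : z = (γ n).1 (t, φ) := hz
      simp only [pertMap, Prod.mk.injEq] at hf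
      obtain ⟨f1, f2, f3⟩ := hf
      refine ⟨hs, ?_⟩
      change w = (γ (n + 1)).1 (s, ψ)
      rw [hγ, ← f1, ← f2, ← f3, hz', hG2 (γ n) t φ (by linarith)]
    · rintro ⟨hs, hw⟩
      have hs' : T + 1 ≤ s := hs
      have hw' : w = (γ (n + 1)).1 (s, ψ) := hw
      obtain ⟨φ, hφ⟩ := hG3 (γ n) (s + 1) ψ (by linarith)
      refine ⟨⟨(s + 1, φ, (γ n).1 (s + 1, φ)), ⟨?_, rfl⟩, ?_⟩, hs⟩
      · change T + 1 ≤ s + 1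
        linarith
      · have e := hG2 (γ n) (s + 1) φ (by linarith)
        rw [hφ, add_sub_cancel_right, ← hγ, ← hw'] at e
        simp only [pertMap, Prod.mk.injEq]
        exact ⟨by ring, hφ, e.symm⟩
  · have hconv : ∀ n : ℕ, ∀ t φ : ℝ, T < t → |(γ n).1 (t, φ) - h (t, φ)| ≤ (7/10 : ℝ) ^ n := by
      intro n
      induction n with
      | zero =>
        intro t φ ht
        have e1 := abs_le.1 ((γ 0).2.bd t φ ht)
        have e2 := abs_le.1 (hTh.bd t φ ht)
        rw [pow_zero]
        exact abs_le.2 ⟨by linarith [e1.1, e2.2], by linarith [e1.2, e2.1]⟩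
      | succ n ih =>
        intro s ψ hs
        obtain ⟨φ, hφ⟩ := hG3 (γ n) (s + 1) ψ (by linarith)
        have hs1 : T < s + 1 := by linarith
        have e := hG2 (γ n) (s + 1) φ (by linarith)
        rw [hφ, add_sub_cancel_right, ← hγ] at e
        have k := hinv (s + 1) φ (by linarith)
        rw [add_sub_cancel_right] at k
        have IH := ih (s + 1) φ hs1
        have b1 : |(γ n).1 (s + 1, φ)| < 1 := ((γ n).2.bd _ φ hs1).trans_lt (by norm_num)
        have b2 : |h (s + 1, φ)| < 1 := (hTh.bd _ φ hs1).trans_lt (by norm_num)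
        have l1 := hT1.lip (s + 1) φ φ _ _ hs1 b1 b2
        have l2 := hT2.lip (s + 1) φ φ _ _ hs1 b1 b2
        rw [sub_self, abs_zero, zero_add] at l1 l2
        set x := (γ n).1 (s + 1, φ)
        set y := h (s + 1, φ)
        have l3 := hTh.lip s ψ (φ + a - y + ε₁ (s + 1, φ, y)) hs
        have l4 : |ψ - (φ + a - y + ε₁ (s + 1, φ, y))| ≤ 101/100 * |x - y| := by
          rw [← hφ]
          have m1 := abs_le.1 l1
          have m2 := neg_abs_le (x - y)
          have m3 := le_abs_self (x - y)
          exact abs_le.2 ⟨by linarith [m1.1], by linarith [m1.2]⟩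
        rw [k] at l3
        have m1 := abs_le.1 l2
        have m2 := neg_abs_le (x - y)
        have m3 := le_abs_self (x - y)
        have m4 := abs_le.1 (l3.trans (mul_le_mul_of_nonneg_left l4 (by norm_num)))
        rw [e, pow_succ]
        have m5 := abs_nonneg (x - y)
        exact abs_le.2 ⟨by linarith [m1.1, m4.2], by linarith [m1.2, m4.1]⟩
    intro δ hδ
    obtain ⟨N, hN⟩ := exists_pow_lt_of_lt_one hδ (show (7/10 : ℝ) < 1 by norm_num)
    refine ⟨N, ?_⟩
    rintro n hn ⟨t, φ⟩ hp
    have hp' : T + 1 ≤ t := hp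
    exact ((hconv n t φ (by linarith)).trans
      (pow_le_pow_of_le_one (by norm_num) (by norm_num) hn)).trans hN.le
end

section
/- Fix real parameters 𝔪, a, Q, Λ and real numbers r, θ, and set b := 1 + Λa²/3, κ := 1 + (Λa²/3)cos²θ, ϱ² := r² + a² cos²θ, μ := (r² + a²)(1 − Λr²/3) − 2𝔪r + b²Q². Assume b ≠ 0, κ ≠ 0, μ ≠ 0, sin θ ≠ 0, ϱ² ≠ 0. Let M be the symmetric 4×4 real matrix, with index order (t, r, θ, φ), defined by M := −(μ/(b²ϱ²)) u uᵀ + (ϱ²/μ) e_r e_rᵀ + (ϱ²/κ) e_θ e_θᵀ + (κ sin²θ/(b²ϱ²)) v vᵀ, where u = (1, 0, 0, −a sin²θ)ᵀ, v = (a, 0, 0, −(r²+a²))ᵀ, and e_r, e_θ are the standard basis vectors in the r- and θ-slots. Then M is invertible, and for every ζ = (σ, ξ, η_θ, η_φ) ∈ ℝ⁴, setting ξ_BL := ξ + (b/μ)((r²+a²)σ + a η_φ) and ζ_BL := (σ, ξ_BL, η_θ, η_φ), one has ϱ² · ζ_BLᵀ M⁻¹ ζ_BL = μ ξ² + 2b((r²+a²)σ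 + a η_φ) ξ + κ η_θ² + (b²/(κ sin²θ))(η_φ + a sin²θ · σ)². -/
open Matrix

/-- The Kerr–Newman–de Sitter metric in Boyer–Lindquist coordinates `(t, r, θ, φ)` has matrix
`M = -(μ/(b²ϱ²)) u uᵀ + (ϱ²/μ) e_r e_rᵀ + (ϱ²/κ) e_θ e_θᵀ + (κ sin²θ/(b²ϱ²)) v vᵀ` with
`u = (1,0,0,-a sin²θ)`, `v = (a,0,0,-(r²+a²))`. It is invertible, and the rescaled dual metric
function in Kerr-star coordinates is
`ϱ² ζ_BLᵀ M⁻¹ ζ_BL = μ ξ² + 2b((r²+a²)σ + a η_φ)ξ + κ η_θ² + (b²/(κ sin²θ))(η_φ + a sin²θ σ)²`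
where `ξ_BL = ξ + (b/μ)((r²+a²)σ + a η_φ)` and `ζ_BL = (σ, ξ_BL, η_θ, η_φ)`. -/
theorem kerr_star_dual_metric_identity (𝔪 a Q Λ r θ : ℝ)
    (b κ ρsq μ : ℝ)
    (hb : b = 1 + Λ * a ^ 2 / 3)
    (hκ : κ = 1 + Λ * a ^ 2 / 3 * Real.cos θ ^ 2)
    (hρsq : ρsq = r ^ 2 + a ^ 2 * Real.cos θ ^ 2)
    (hμ : μ = (r ^ 2 + a ^ 2) * (1 - Λ * r ^ 2 / 3) - 2 * 𝔪 * r + b ^ 2 * Q ^ 2)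
    (hb0 : b ≠ 0) (hκ0 : κ ≠ 0) (hμ0 : μ ≠ 0) (hsin : Real.sin θ ≠ 0) (hρ0 : ρsq ≠ 0)
    (u v er eθ : Fin 4 → ℝ)
    (hu : u = ![1, 0, 0, -(a * Real.sin θ ^ 2)])
    (hv : v = ![a, 0, 0, -(r ^ 2 + a ^ 2)])
    (her : er = ![0, 1, 0, 0]) (heθ : eθ = ![0, 0, 1, 0])
    (M : Matrix (Fin 4) (Fin 4) ℝ)
    (hM : M = (-(μ / (b ^ 2 * ρsq))) • vecMulVec u u
        + (ρsq / μ) • vecMulVec er er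
        + (ρsq / κ) • vecMulVec eθ eθ
        + (κ * Real.sin θ ^ 2 / (b ^ 2 * ρsq)) • vecMulVec v v) :
    IsUnit M ∧
    ∀ σ ξ ηθ ηφ ξBL : ℝ,
      ξBL = ξ + b / μ * ((r ^ 2 + a ^ 2) * σ + a * ηφ) →
      ρsq * (![σ, ξBL, ηθ, ηφ] ⬝ᵥ (M⁻¹ *ᵥ ![σ, ξBL, ηθ, ηφ]))
        = μ * ξ ^ 2 + 2 * b * ((r ^ 2 + a ^ 2) * σ + a * ηφ) * ξ
          + κ * ηθ ^ 2
          + b ^ 2 / (κ * Real.sin θ ^ 2) * (ηφ + a * Real.sin θ ^ 2 * σ) ^ 2 := by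
  have hR : r ^ 2 + a ^ 2 = ρsq + a ^ 2 * Real.sin θ ^ 2 := by
    rw [hρsq, Real.cos_sq']; ring
  rw [hR] at hv
  rw [hR]
  have hS : Real.sin θ ^ 2 ≠ 0 := pow_ne_zero 2 hsin
  clear hb hκ hρsq hμ hR
  generalize Real.sin θ ^ 2 = S at *
  obtain ⟨N, hN⟩ : ∃ N : Matrix (Fin 4) (Fin 4) ℝ, N =
      !![(-(b ^ 2 / μ) * (ρsq + a ^ 2 * S) ^ 2 + b ^ 2 / (κ * S) * (a * S) ^ 2) / ρsq, 0, 0,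
          (-(b ^ 2 / μ) * (ρsq + a ^ 2 * S) * a + b ^ 2 / (κ * S) * (a * S)) / ρsq;
        0, μ / ρsq, 0, 0;
        0, 0, κ / ρsq, 0;
        (-(b ^ 2 / μ) * (ρsq + a ^ 2 * S) * a + b ^ 2 / (κ * S) * (a * S)) / ρsq, 0, 0,
          (-(b ^ 2 / μ) * a ^ 2 + b ^ 2 / (κ * S)) / ρsq] := ⟨_, rfl⟩
  have hMN : M * N = 1 := by
    subst hM hN hu hv her heθ
    ext i j
    fin_cases i <;> fin_cases j <;>
      simp [Matrix.mul_apply, Fin.sum_univ_four, vecMulVec_apply] <;>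
      field_simp <;> ring
  refine ⟨IsUnit.of_mul_eq_one N hMN, ?_⟩
  intro σ ξ ηθ ηφ ξBL hξ
  rw [Matrix.inv_eq_right_inv hMN, hN, hξ]
  simp [Matrix.mulVec, dotProduct, Fin.sum_univ_four]
  field_simp
  ring
end

section
/- Fix real parameters 𝔪, a, Q, Λ with b := 1 + Λa²/3 > 0, set κ(θ) := 1 + (Λa²/3)cos²θ and μ(r) := (r² + a²)(1 − Λr²/3) − 2𝔪r + b²Q², and assume μ(r₊) = 0, μ′(r₊) > 0, and r₊² + a² > 0. Fix 0 < θ₁ < θ₂ < π, ε > 0, and a smooth function r₀ : [θ₁,θ₂] × (−ε,ε)³ → ℝ with r₀(θ, 0, 0, 0) = r₊ for all θ. Define, with r := r₀(θ, σ̂, η̂_θ, η̂_φ) and c(r,σ̂) := (μ′(r) + 4br σ̂)/(2b(r²+a²)), the three functions V_σ := −c(r,σ̂) σ̂, V_{η_θ} := −c(r,σ̂) η̂_θ + (1/(2b(r²+a²))) [ κ′(θ) η̂_θ² + ∂_θ( (b²/(κ(θ) sin²θ)) (η̂_φ + a sin²θ · σ̂)² ) ], and V_{η_φ} := −c(r,σ̂)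 η̂_φ. Then at every point with σ̂ = η̂_θ = η̂_φ = 0: (i) V_σ = V_{η_θ} = V_{η_φ} = 0, and (ii) the 3×3 Jacobian matrix ∂(V_σ, V_{η_θ}, V_{η_φ})/∂(σ̂, η̂_θ, η̂_φ) equals −κ₀ times the identity, where κ₀ := μ′(r₊)/(2b(r₊² + a²)) > 0. -/
open Set

lemma hnl_aux {F f : ℝ → ℝ} {d : ℝ} (hf : ContinuousAt f 0) (hd : f 0 = d)
    (h : ∀ s, F s = f s * s) : deriv F 0 = d := by
  apply HasDerivAt.deriv
  have hF : F = fun s => f s * s := funext h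
  rw [hasDerivAt_iff_tendsto_slope, hF]
  have h1 : Filter.Tendsto f (nhdsWithin 0 {0}ᶜ) (nhds d) := by
    rw [← hd]; exact hf.tendsto.mono_left nhdsWithin_le_nhds
  refine h1.congr' ?_
  filter_upwards [self_mem_nhdsWithin] with s hs
  have hs' : s ≠ 0 := hs
  simp [slope_def_field, hs']


/-- Normal sink structure of the horizon: the fiber components `(V_σ, V_{η_θ}, V_{η_φ})` of the
rescaled null-geodesic generator of the Kerr–Newman–de Sitter metric, in the homogeneous fiber
coordinates `(σ̂, η̂_θ, η̂_φ)` on the characteristic set `r = r₀(θ, σ̂, η̂_θ, η̂_φ)`, vanish on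
`Γ = {σ̂ = η̂_θ = η̂_φ = 0}`, and their Jacobian in `(σ̂, η̂_θ, η̂_φ)` there is `-κ₀·Id`, where
`κ₀ = μ'(r₊)/(2b(r₊²+a²)) > 0` is the surface gravity. -/
theorem horizon_normal_linearization (𝔪 a Q Λ : ℝ)
    (b : ℝ) (hb : b = 1 + Λ * a ^ 2 / 3) (hbpos : 0 < b)
    (κ μ : ℝ → ℝ)
    (hκ : ∀ θ, κ θ = 1 + Λ * a ^ 2 / 3 * Real.cos θ ^ 2)
    (hμ : ∀ r, μ r = (r ^ 2 + a ^ 2) * (1 - Λ * r ^ 2 / 3) - 2 * 𝔪 * r + b ^ 2 * Q ^ 2)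
    (rp : ℝ) (hrp : μ rp = 0) (hrp' : 0 < deriv μ rp) (hra : 0 < rp ^ 2 + a ^ 2)
    (θ₁ θ₂ ε : ℝ) (hθ₁ : 0 < θ₁) (hθ₁₂ : θ₁ < θ₂) (hθ₂ : θ₂ < Real.pi) (hε : 0 < ε)
    (r₀ : ℝ → ℝ → ℝ → ℝ → ℝ)
    (hr₀smooth : ContDiffOn ℝ (⊤ : ℕ∞) (fun p : ℝ × ℝ × ℝ × ℝ => r₀ p.1 p.2.1 p.2.2.1 p.2.2.2)
      (Icc θ₁ θ₂ ×ˢ Ioo (-ε) ε ×ˢ Ioo (-ε) ε ×ˢ Ioo (-ε) ε))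
    (hr₀ : ∀ θ ∈ Icc θ₁ θ₂, r₀ θ 0 0 0 = rp)
    (c : ℝ → ℝ → ℝ)
    (hc : ∀ r σ, c r σ = (deriv μ r + 4 * b * r * σ) / (2 * b * (r ^ 2 + a ^ 2)))
    (Vσ Vηθ Vηφ : ℝ → ℝ → ℝ → ℝ → ℝ)
    (hVσ : ∀ θ σ ηθ ηφ, Vσ θ σ ηθ ηφ = -(c (r₀ θ σ ηθ ηφ) σ) * σ)
    (hVηθ : ∀ θ σ ηθ ηφ, Vηθ θ σ ηθ ηφ = -(c (r₀ θ σ ηθ ηφ) σ) * ηθ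
      + 1 / (2 * b * ((r₀ θ σ ηθ ηφ) ^ 2 + a ^ 2)) *
        (deriv κ θ * ηθ ^ 2
          + deriv (fun θ' => b ^ 2 / (κ θ' * Real.sin θ' ^ 2)
              * (ηφ + a * Real.sin θ' ^ 2 * σ) ^ 2) θ))
    (hVηφ : ∀ θ σ ηθ ηφ, Vηφ θ σ ηθ ηφ = -(c (r₀ θ σ ηθ ηφ) σ) * ηφ)
    (κ₀ : ℝ) (hκ₀ : κ₀ = deriv μ rp / (2 * b * (rp ^ 2 + a ^ 2))) :
    0 < κ₀ ∧
    ∀ θ ∈ Icc θ₁ θ₂,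
      -- (i) the components vanish on Γ = {σ̂ = η̂_θ = η̂_φ = 0}
      (Vσ θ 0 0 0 = 0 ∧ Vηθ θ 0 0 0 = 0 ∧ Vηφ θ 0 0 0 = 0) ∧
      -- (ii) the Jacobian in (σ̂, η̂_θ, η̂_φ) on Γ is -κ₀ · Id
      !![deriv (fun s => Vσ θ s 0 0) 0, deriv (fun s => Vσ θ 0 s 0) 0,
           deriv (fun s => Vσ θ 0 0 s) 0;
         deriv (fun s => Vηθ θ s 0 0) 0, deriv (fun s => Vηθ θ 0 s 0) 0,
           deriv (fun s => Vηθ θ 0 0 s) 0;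
         deriv (fun s => Vηφ θ s 0 0) 0, deriv (fun s => Vηφ θ 0 s 0) 0,
           deriv (fun s => Vηφ θ 0 0 s) 0]
        = (-κ₀) • (1 : Matrix (Fin 3) (Fin 3) ℝ) := by
  have hden : 0 < 2 * b * (rp ^ 2 + a ^ 2) := by positivity
  refine ⟨by rw [hκ₀]; positivity, ?_⟩
  intro θ hθ
  have hμc : Continuous (deriv μ) := by
    have : ContDiff ℝ 1 μ := by
      rw [funext hμ]; fun_prop
    exact this.continuous_deriv le_rfl
  have hr0 := hr₀ θ hθ
  have hrc : ∀ g : ℝ → ℝ × ℝ × ℝ, Continuous g → g 0 = (0, 0, 0) →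
      ContinuousAt (fun s => r₀ θ (g s).1 (g s).2.1 (g s).2.2) 0 := by
    intro g hg hg0
    have h1 := hr₀smooth.continuousOn (θ, 0, 0, 0)
      ⟨hθ, ⟨by simpa using hε, hε⟩, ⟨by simpa using hε, hε⟩, ⟨by simpa using hε, hε⟩⟩
    have hU : (Ioo (-ε) ε ×ˢ Ioo (-ε) ε ×ˢ Ioo (-ε) ε : Set (ℝ × ℝ × ℝ)) ∈ nhds (g 0) := by
      apply (isOpen_Ioo.prod (isOpen_Ioo.prod isOpen_Ioo)).mem_nhds
      rw [hg0]
      exact ⟨⟨by simpa using hε, hε⟩, ⟨by simpa using hε, hε⟩, ⟨by simpa using hε, hε⟩⟩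
    have h2 : Filter.Tendsto (fun s => (θ, g s)) (nhds 0)
        (nhdsWithin (θ, 0, 0, 0)
          (Icc θ₁ θ₂ ×ˢ Ioo (-ε) ε ×ˢ Ioo (-ε) ε ×ˢ Ioo (-ε) ε)) := by
      apply tendsto_nhdsWithin_of_tendsto_nhds_of_eventually_within
      · rw [← hg0]
        exact (Continuous.prodMk continuous_const hg).tendsto 0
      · filter_upwards [hg.continuousAt hU] with s hs
        exact ⟨hθ, hs⟩
    have h3 := Filter.Tendsto.comp h1 h2
    unfold ContinuousAt
    simp only [hg0]
    exact h3
  have hic : ∀ g : ℝ → ℝ × ℝ × ℝ, Continuous g → g 0 = (0, 0, 0) →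
      ContinuousAt (fun s => 1 / (2 * b * ((r₀ θ (g s).1 (g s).2.1 (g s).2.2) ^ 2 + a ^ 2))) 0 := by
    intro g hg hg0
    have h := hrc g hg hg0
    refine ContinuousAt.div continuousAt_const ((continuousAt_const (y := 2 * b)).mul ((h.pow 2).add continuousAt_const)) ?_
    change 2 * b * ((r₀ θ (g 0).1 (g 0).2.1 (g 0).2.2) ^ 2 + a ^ 2) ≠ 0
    rw [hg0, hr0]; exact hden.ne'
  have hcc : ∀ g : ℝ → ℝ × ℝ × ℝ, Continuous g → g 0 = (0, 0, 0) →
      ContinuousAt (fun s => -(c (r₀ θ (g s).1 (g s).2.1 (g s).2.2) (g s).1)) 0 := by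
    intro g hg hg0
    have h := hrc g hg hg0
    have h' : ContinuousAt (fun s => deriv μ (r₀ θ (g s).1 (g s).2.1 (g s).2.2)) 0 :=
      ContinuousAt.comp (g := deriv μ) hμc.continuousAt h
    have hg' := hg.continuousAt (x := 0)
    simp only [hc]
    refine (ContinuousAt.div
      (h'.add (((continuousAt_const (y := 4 * b)).mul h).mul hg'.fst))
      ((continuousAt_const (y := 2 * b)).mul ((h.pow 2).add continuousAt_const)) ?_).neg
    change 2 * b * ((r₀ θ (g 0).1 (g 0).2.1 (g 0).2.2) ^ 2 + a ^ 2) ≠ 0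
    rw [hg0, hr0]; exact hden.ne'
  have hc0 : -(c rp 0) = -κ₀ := by rw [hc, hκ₀]; simp
  have d1 : ∀ s : ℝ, deriv (fun θ' => b ^ 2 / (κ θ' * Real.sin θ' ^ 2)
      * (0 + a * Real.sin θ' ^ 2 * s) ^ 2) θ = s ^ 2 * deriv (fun θ' => b ^ 2 /
        (κ θ' * Real.sin θ' ^ 2) * (a * Real.sin θ' ^ 2) ^ 2) θ := by
    intro s
    rw [← deriv_const_mul_field]
    congr 1; funext x; ring
  have d3 : ∀ s : ℝ, deriv (fun θ' => b ^ 2 / (κ θ' * Real.sin θ' ^ 2)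
      * (s + a * Real.sin θ' ^ 2 * 0) ^ 2) θ = s ^ 2 * deriv (fun θ' => b ^ 2 /
        (κ θ' * Real.sin θ' ^ 2)) θ := by
    intro s
    rw [← deriv_const_mul_field]
    congr 1; funext x; ring
  have g1 : Continuous (fun s : ℝ => ((s, 0, 0) : ℝ × ℝ × ℝ)) := by fun_prop
  have g2 : Continuous (fun s : ℝ => ((0, s, 0) : ℝ × ℝ × ℝ)) := by fun_prop
  have g3 : Continuous (fun s : ℝ => ((0, 0, s) : ℝ × ℝ × ℝ)) := by fun_prop
  have c1 := hcc _ g1 rfl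
  have c2 := hcc _ g2 rfl
  have c3 := hcc _ g3 rfl
  have i1 := hic _ g1 rfl
  have i2 := hic _ g2 rfl
  have i3 := hic _ g3 rfl
  dsimp only at c1 c2 c3 i1 i2 i3
  have e11 : deriv (fun s => Vσ θ s 0 0) 0 = -κ₀ :=
    hnl_aux c1 (by simpa only [hr0] using hc0) (fun s => hVσ _ _ _ _)
  have e12 : deriv (fun s => Vσ θ 0 s 0) 0 = 0 := by simp [hVσ]
  have e13 : deriv (fun s => Vσ θ 0 0 s) 0 = 0 := by simp [hVσ]
  have e31 : deriv (fun s => Vηφ θ s 0 0) 0 = 0 := by simp [hVηφ]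
  have e32 : deriv (fun s => Vηφ θ 0 s 0) 0 = 0 := by simp [hVηφ]
  have e33 : deriv (fun s => Vηφ θ 0 0 s) 0 = -κ₀ :=
    hnl_aux c3 (by simpa only [hr0] using hc0) (fun s => hVηφ _ _ _ _)
  have e21 : deriv (fun s => Vηθ θ s 0 0) 0 = 0 := by
    refine hnl_aux (i1.mul (continuousAt_id.mul (continuousAt_const (y := deriv (fun θ' => b ^ 2 /
        (κ θ' * Real.sin θ' ^ 2) * (a * Real.sin θ' ^ 2) ^ 2) θ)))) (by simp) (fun s => ?_)
    rw [hVηθ, d1]; try simp only [Pi.mul_apply, Pi.add_apply, id]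
    ring
  have e23 : deriv (fun s => Vηθ θ 0 0 s) 0 = 0 := by
    refine hnl_aux (i3.mul (continuousAt_id.mul (continuousAt_const (y := deriv (fun θ' => b ^ 2 /
        (κ θ' * Real.sin θ' ^ 2)) θ)))) (by simp) (fun s => ?_)
    rw [hVηθ, d3]; try simp only [Pi.mul_apply, Pi.add_apply, id]
    ring
  have e22 : deriv (fun s => Vηθ θ 0 s 0) 0 = -κ₀ := by
    refine hnl_aux (c2.add (i2.mul (continuousAt_id.mul (continuousAt_const (y := deriv κ θ)))))
      (by simpa [hr0] using hc0) (fun s => ?_)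
    rw [hVηθ, d3]; try simp only [Pi.mul_apply, Pi.add_apply, id]
    ring
  refine ⟨⟨by simp [hVσ], by rw [hVηθ, d3]; simp, by simp [hVηφ]⟩, ?_⟩
  rw [e11, e12, e13, e21, e22, e23, e31, e32, e33]
  ext i j
  fin_cases i <;> fin_cases j <;> simp
end
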